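/- arXiv:1105.5127 — 4 statements merged into one kernel-verified Lean document; each statement's English description precedes it below -/
import Mathlib

section
/- Let p be an odd prime, r ≥ 1, and q = p^r. Let f(x,y) = A x² + 2B x y + C y² be an integral binary quadratic form with p ∤ A and AC − B² = a² for a nonzero integer a. Let b be an integer with gcd(b, p) = 1 and let u, v be integers. Consider S = ∑_{x=0}^{q−1} ∑_{y=0}^{q−1} e_q(b·f(x,y) + u x + v y). Then S = 0 unless gcd(a², q) divides A v − B u, and in all cases |S| ≤ q · gcd(a², q)^{1/2}. -/
/-- The additive character `e_q(x) = exp(2πi x / q)`. -/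
noncomputable def eChar (q : ℕ) (x : ℤ) : ℂ :=
  Complex.exp (2 * Real.pi * Complex.I * (x : ℂ) / (q : ℂ))

/-!
On a finite module `M` over a finite commutative ring `R` with a primitive character `ψ`,
translating the summation variable of `S = ∑ z, ψ (Q z + ℓ z)` by a vector `h` of the radical of `Q`
multiplies `S` by `ψ (ℓ h)`, so `S` vanishes unless `ℓ` is zero on the radical. Weyl differencing
gives `‖S‖² = #M * ∑ ψ (Q h + ℓ h)`, the sum running over the kernel of the polar form of `Q`.

For `Q = b (A x² + 2 B x y + C y²)` and `D = A C - B²`, the vectors `k (-B, A)` with `D k = 0` lie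
in the radical, and `ℓ = u x + v y` takes the value `k (A v - B u)` there. If `2`, `b` and `A` are
units, the second coordinate embeds the kernel of the polar form into `{k | D k = 0}`, which has
`gcd(D, q)` elements when `R = ℤ/q`.
-/

section QuadraticGaussSum

variable {R M : Type*} [CommRing R] [AddCommGroup M] [Module R M]

theorem ker_polarBilin_smul {b : R} (hb : IsUnit b) (Q : QuadraticForm R M) :
    (b • Q).polarBilin.ker = Q.polarBilin.ker := by
  ext h
  simp [LinearMap.ext_iff, QuadraticMap.polar_smul, hb.mul_right_eq_zero]

theorem radical_le_radical_smul (b : R) (Q : QuadraticForm R M) :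
    Q.radical ≤ (b • Q).radical := by
  intro h hh
  rw [QuadraticMap.mem_radical_iff'] at hh ⊢
  simp [hh.1, hh.2]

variable [Fintype M]

/-- The Gauss sum `∑ z, ψ (Q z + ℓ z)` attached to an additive character `ψ`, a quadratic form `Q`
and a linear form `ℓ` on a finite module. -/
def quadraticGaussSum {R' : Type*} [CommRing R'] (ψ : AddChar R R') (Q : QuadraticForm R M)
    (ℓ : M →ₗ[R] R) : R' :=
  ∑ z, ψ (Q z + ℓ z)

section CommRing

variable {R' : Type*} [CommRing R'] {ψ : AddChar R R'}

theorem sum_addChar_linearMap [IsDomain R'] (hψ : ψ.IsPrimitive) (φ : M →ₗ[R] R)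
    [Decidable (φ = 0)] :
    ∑ z, ψ (φ z) = if φ = 0 then (Fintype.card M : R') else 0 := by
  split_ifs with hφ
  · simp [hφ]
  obtain ⟨z, hz⟩ : ∃ z, φ z ≠ 0 := by simpa [LinearMap.ext_iff] using hφ
  obtain ⟨t, ht⟩ := AddChar.ne_one_iff.mp (hψ hz)
  refine AddChar.sum_eq_zero_of_ne_one (ψ := ψ.compAddMonoidHom φ.toAddMonoidHom)
    (AddChar.ne_one_iff.mpr ⟨t • z, ?_⟩)
  simpa [mul_comm] using ht

theorem quadraticGaussSum_eq_mul_of_mem_radical (ψ : AddChar R R') {Q : QuadraticForm R M}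
    (ℓ : M →ₗ[R] R) {h : M} (hh : h ∈ Q.radical) :
    quadraticGaussSum ψ Q ℓ = ψ (ℓ h) * quadraticGaussSum ψ Q ℓ := by
  rw [QuadraticMap.mem_radical_iff'] at hh
  calc quadraticGaussSum ψ Q ℓ
      = ∑ z, ψ (Q (h + z) + ℓ (h + z)) := (Equiv.sum_comp (Equiv.addLeft h) _).symm
    _ = ∑ z, ψ (ℓ h) * ψ (Q z + ℓ z) := by
        simp only [hh.2, map_add, ← AddChar.map_add_eq_mul, add_left_comm]
    _ = ψ (ℓ h) * quadraticGaussSum ψ Q ℓ := (Finset.mul_sum ..).symm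

theorem radical_le_ker_of_quadraticGaussSum_ne_zero [IsDomain R'] (hψ : ψ.IsPrimitive)
    {Q : QuadraticForm R M} {ℓ : M →ₗ[R] R} (hS : quadraticGaussSum ψ Q ℓ ≠ 0) :
    Q.radical ≤ ℓ.ker := by
  intro h hh
  by_contra hℓ
  obtain ⟨t, ht⟩ := AddChar.ne_one_iff.mp (hψ hℓ)
  have hfix := quadraticGaussSum_eq_mul_of_mem_radical ψ ℓ (Q.radical.smul_mem t hh)
  rw [eq_comm, mul_eq_right₀ hS, map_smul, smul_eq_mul, mul_comm] at hfix
  exact ht hfix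

end CommRing

variable [Finite R] {ψ : AddChar R ℂ}

open scoped ComplexConjugate in
theorem quadraticGaussSum_conj_mul_self (hψ : ψ.IsPrimitive) (Q : QuadraticForm R M)
    (ℓ : M →ₗ[R] R) [DecidablePred (· ∈ Q.polarBilin.ker)] :
    conj (quadraticGaussSum ψ Q ℓ) * quadraticGaussSum ψ Q ℓ =
      Fintype.card M * ∑ h with h ∈ Q.polarBilin.ker, ψ (Q h + ℓ h) := by
  classical
  have differencing (z : M) : conj (ψ (Q z + ℓ z)) * quadraticGaussSum ψ Q ℓ =
      ∑ h, ψ (Q h + ℓ h) * ψ (Q.polarBilin h z) := by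
    rw [quadraticGaussSum, Finset.mul_sum, ← Equiv.sum_comp (Equiv.addRight z)]
    refine Finset.sum_congr rfl fun h _ => ?_
    rw [← AddChar.map_neg_eq_conj, ← AddChar.map_add_eq_mul, ← AddChar.map_add_eq_mul,
      Equiv.coe_addRight, QuadraticMap.map_add Q, map_add ℓ, QuadraticMap.polarBilin_apply_apply]
    congr 1
    ring
  calc conj (quadraticGaussSum ψ Q ℓ) * quadraticGaussSum ψ Q ℓ
      = ∑ z, ∑ h, ψ (Q h + ℓ h) * ψ (Q.polarBilin h z) := by
        simp only [← differencing, ← Finset.sum_mul, ← map_sum, quadraticGaussSum]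
    _ = ∑ h, ψ (Q h + ℓ h) * ∑ z, ψ (Q.polarBilin h z) := by
        rw [Finset.sum_comm]
        simp only [Finset.mul_sum]
    _ = Fintype.card M * ∑ h with h ∈ Q.polarBilin.ker, ψ (Q h + ℓ h) := by
        simp only [sum_addChar_linearMap hψ, mul_ite, mul_zero, Finset.mul_sum, Finset.sum_filter,
          LinearMap.mem_ker, mul_comm (ψ _), ite_mul, zero_mul]

theorem norm_quadraticGaussSum_sq_le (hψ : ψ.IsPrimitive) (Q : QuadraticForm R M)
    (ℓ : M →ₗ[R] R) :
    ‖quadraticGaussSum ψ Q ℓ‖ ^ 2 ≤ Nat.card M * Nat.card Q.polarBilin.ker := by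
  classical
  have hsq := congrArg norm (quadraticGaussSum_conj_mul_self hψ Q ℓ)
  rw [norm_mul, norm_mul, RCLike.norm_conj, ← sq, Complex.norm_natCast] at hsq
  rw [hsq, Nat.card_eq_fintype_card, Nat.card_eq_fintype_card, Fintype.card_subtype]
  gcongr
  exact (norm_sum_le _ _).trans (by simp [AddChar.norm_apply])

end QuadraticGaussSum

section BinaryForm

variable {R : Type*} [CommRing R]

/-- The binary quadratic form `A x² + 2 B x y + C y²`, on `R × R`; the middle coefficient is `2 B`,
so that its Gram matrix `!![A, B; B, C]` has determinant `A C - B²`. -/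
def binaryForm (A B C : R) : QuadraticForm R (R × R) :=
  A • QuadraticMap.linMulLin (.fst R R R) (.fst R R R) +
    (2 * B) • QuadraticMap.linMulLin (.fst R R R) (.snd R R R) +
    C • QuadraticMap.linMulLin (.snd R R R) (.snd R R R)

/-- The linear form `u x + v y` on `R × R`, the linear part of the phase of a binary Gauss sum. -/
def binaryLinearForm (u v : R) : R × R →ₗ[R] R :=
  u • .fst R R R + v • .snd R R R

theorem binaryForm_apply (A B C x y : R) :
    binaryForm A B C (x, y) = A * x ^ 2 + 2 * B * x * y + C * y ^ 2 := by
  simp only [binaryForm, add_apply, smul_apply, QuadraticMap.linMulLin_apply, LinearMap.fst_apply,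
    LinearMap.snd_apply, smul_eq_mul]
  ring

theorem binaryLinearForm_apply (u v x y : R) : binaryLinearForm u v (x, y) = u * x + v * y := by
  simp [binaryLinearForm]

theorem polarBilin_binaryForm (A B C x y x' y' : R) :
    (binaryForm A B C).polarBilin (x, y) (x', y') =
      2 * (A * x + B * y) * x' + 2 * (B * x + C * y) * y' := by
  rw [QuadraticMap.polarBilin_apply_apply, QuadraticMap.polar, Prod.mk_add_mk]
  simp only [binaryForm_apply]
  ring

theorem mem_radical_binaryForm {A B C k : R} (hk : (A * C - B ^ 2) * k = 0) :
    (-(k * B), k * A) ∈ (binaryForm A B C).radical := by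
  refine QuadraticMap.mem_radical_iff'.mpr ⟨?_, fun ⟨x, y⟩ => ?_⟩
  · rw [binaryForm_apply]
    linear_combination A * k * hk
  · rw [Prod.mk_add_mk, binaryForm_apply, binaryForm_apply]
    linear_combination (A * k + 2 * y) * hk

theorem card_ker_polarBilin_binaryForm_le [Finite R] (h2 : IsUnit (2 : R)) {A : R} (hA : IsUnit A)
    (B C : R) :
    Nat.card (binaryForm A B C).polarBilin.ker ≤
      Nat.card (Submodule.torsionBy R R (A * C - B ^ 2)) := by
  have kernel_equations {z : R × R} (hz : z ∈ (binaryForm A B C).polarBilin.ker) :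
      A * z.1 + B * z.2 = 0 ∧ B * z.1 + C * z.2 = 0 := by
    have hpolar (x y : R) :
        2 * (A * z.1 + B * z.2) * x + 2 * (B * z.1 + C * z.2) * y = 0 := by
      rw [← polarBilin_binaryForm, Prod.mk.eta, LinearMap.mem_ker.mp hz, LinearMap.zero_apply]
    exact ⟨h2.mul_right_eq_zero.mp (by simpa using hpolar 1 0),
      h2.mul_right_eq_zero.mp (by simpa using hpolar 0 1)⟩
  refine Nat.card_le_card_of_injective
    (fun z => ⟨z.1.2, (Submodule.mem_torsionBy_iff _ _).mpr ?_⟩) fun z w hzw => ?_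
  · obtain ⟨hx, hy⟩ := kernel_equations z.2
    rw [smul_eq_mul]
    linear_combination A * hy - B * hx
  · have hsnd : z.1.2 = w.1.2 := congrArg Subtype.val hzw
    have hfst : A * z.1.1 = A * w.1.1 := by
      linear_combination (kernel_equations z.2).1 - (kernel_equations w.2).1 - B * hsnd
    exact Subtype.ext (Prod.ext (hA.mul_left_cancel hfst) hsnd)

variable [Fintype R] {A : R}

theorem mul_eq_zero_of_quadraticGaussSum_binaryForm_ne_zero {R' : Type*} [CommRing R'] [IsDomain R']
    {ψ : AddChar R R'} (hψ : ψ.IsPrimitive) {B C b u v k : R}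
    (hS : quadraticGaussSum ψ (b • binaryForm A B C) (binaryLinearForm u v) ≠ 0)
    (hk : (A * C - B ^ 2) * k = 0) : (A * v - B * u) * k = 0 := by
  have hker := radical_le_ker_of_quadraticGaussSum_ne_zero hψ hS
    (radical_le_radical_smul b _ (mem_radical_binaryForm hk))
  rw [LinearMap.mem_ker, binaryLinearForm_apply] at hker
  linear_combination hker

theorem norm_quadraticGaussSum_binaryForm_le {ψ : AddChar R ℂ} (hψ : ψ.IsPrimitive)
    (h2 : IsUnit (2 : R)) (hA : IsUnit A) {b : R} (hb : IsUnit b) (B C : R)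
    (ℓ : R × R →ₗ[R] R) :
    ‖quadraticGaussSum ψ (b • binaryForm A B C) ℓ‖ ≤
      Nat.card R * √(Nat.card (Submodule.torsionBy R R (A * C - B ^ 2))) := by
  refine (sq_le_sq₀ (norm_nonneg _) (by positivity)).mp ?_
  calc ‖quadraticGaussSum ψ (b • binaryForm A B C) ℓ‖ ^ 2
      ≤ Nat.card (R × R) * Nat.card (b • binaryForm A B C).polarBilin.ker :=
        norm_quadraticGaussSum_sq_le hψ _ ℓ
    _ ≤ Nat.card (R × R) * Nat.card (Submodule.torsionBy R R (A * C - B ^ 2)) := by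
        rw [ker_polarBilin_smul hb]
        gcongr
        exact card_ker_polarBilin_binaryForm_le h2 hA B C
    _ = (Nat.card R * √(Nat.card (Submodule.torsionBy R R (A * C - B ^ 2)))) ^ 2 := by
        rw [mul_pow, Real.sq_sqrt (Nat.cast_nonneg _), Nat.card_prod, Nat.cast_mul,
          sq (Nat.card R : ℝ)]

end BinaryForm

section ZMod

variable (q : ℕ) [NeZero q]

theorem sum_range_natCast_zmod {α : Type*} [AddCommMonoid α] (f : ZMod q → α) :
    ∑ x ∈ Finset.range q, f x = ∑ x, f x :=
  Finset.sum_nbij' (fun x => x) ZMod.val (by simp) (by simp [ZMod.val_lt])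
    (fun _ hx => ZMod.val_cast_of_lt (Finset.mem_range.mp hx)) (by simp) (by simp)

theorem card_torsionBy_intCast_zmod (n : ℤ) :
    Nat.card (Submodule.torsionBy (ZMod q) (ZMod q) n) = n.gcd q := by
  have hker := IsAddCyclic.card_nsmulAddMonoidHom_ker (ZMod q) n.natAbs
  rw [Nat.card_zmod, Nat.gcd_comm] at hker
  rw [Int.gcd_def, Int.natAbs_natCast, ← hker]
  refine Nat.card_congr (Equiv.subtypeEquivRight fun x => ?_)
  rcases Int.natAbs_eq n with h | h <;> rw [h] <;> simp

theorem gcd_dvd_of_forall_mul_eq_zero {n m : ℤ}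
    (h : ∀ k : ZMod q, n * k = 0 → m * k = 0) : (n.gcd q : ℤ) ∣ m := by
  obtain ⟨s, hs⟩ : (n.gcd q : ℤ) ∣ n := Int.gcd_dvd_left ..
  obtain ⟨t, ht⟩ : (n.gcd q : ℤ) ∣ q := Int.gcd_dvd_right ..
  have ht0 : t ≠ 0 := by
    rintro rfl
    exact NeZero.ne q (by simpa using ht)
  have hnt : (n : ZMod q) * (t : ℤ) = 0 := by
    rw [← Int.cast_mul, ZMod.intCast_zmod_eq_zero_iff_dvd, ht]
    exact mul_dvd_mul_right ⟨s, hs⟩ t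
  have hmt := h t hnt
  rw [← Int.cast_mul, ZMod.intCast_zmod_eq_zero_iff_dvd, ht] at hmt
  exact Int.dvd_of_mul_dvd_mul_right ht0 hmt

theorem sum_eChar_eq_quadraticGaussSum (A B C b u v : ℤ) :
    ∑ x ∈ Finset.range q, ∑ y ∈ Finset.range q,
        eChar q (b * (A * (x : ℤ) ^ 2 + 2 * B * x * y + C * y ^ 2) + u * x + v * y) =
      quadraticGaussSum (ZMod.stdAddChar (N := q)) ((b : ZMod q) • binaryForm (A : ZMod q) B C)
        (binaryLinearForm (u : ZMod q) v) := by
  have heChar (x y : ℕ) :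
      eChar q (b * (A * (x : ℤ) ^ 2 + 2 * B * x * y + C * y ^ 2) + u * x + v * y) =
        ZMod.stdAddChar (((b : ZMod q) • binaryForm (A : ZMod q) B C) (x, y) +
          binaryLinearForm (u : ZMod q) v (x, y)) := by
    rw [eChar, ← ZMod.stdAddChar_coe, smul_apply, binaryForm_apply,
      binaryLinearForm_apply, smul_eq_mul, ← add_assoc]
    push_cast
    rfl
  simp only [heChar]
  rw [quadraticGaussSum, Fintype.sum_prod_type, ← sum_range_natCast_zmod q]
  exact Finset.sum_congr rfl fun x _ => sum_range_natCast_zmod q fun y => ZMod.stdAddChar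
    (((b : ZMod q) • binaryForm (A : ZMod q) B C) (x, y) + binaryLinearForm (u : ZMod q) v (x, y))

end ZMod

theorem gauss_sum_binary_form_general (q : ℕ) [NeZero q] (A B C b u v : ℤ) :
    (¬ ((Int.gcd (A * C - B ^ 2) q : ℤ) ∣ A * v - B * u) →
        (∑ x ∈ Finset.range q, ∑ y ∈ Finset.range q,
          eChar q (b * (A * (x : ℤ) ^ 2 + 2 * B * x * y + C * y ^ 2) + u * x + v * y)) = 0) ∧
      (Odd q → IsCoprime A q → IsCoprime b q →
        ‖(∑ x ∈ Finset.range q, ∑ y ∈ Finset.range q,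
          eChar q (b * (A * (x : ℤ) ^ 2 + 2 * B * x * y + C * y ^ 2) + u * x + v * y))‖
          ≤ q * Real.sqrt (Int.gcd (A * C - B ^ 2) q)) := by
  have hψ := ZMod.isPrimitive_stdAddChar q
  rw [sum_eChar_eq_quadraticGaussSum]
  refine ⟨fun hdvd => by_contra fun hS => hdvd ?_, fun hq hA hb => ?_⟩
  · refine gcd_dvd_of_forall_mul_eq_zero q fun k hk => ?_
    push_cast at hk ⊢
    exact mul_eq_zero_of_quadraticGaussSum_binaryForm_ne_zero hψ hS hk
  · have h2 : IsUnit (2 : ZMod q) :=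
      mod_cast (ZMod.isUnit_iff_coprime 2 q).mpr (Nat.coprime_two_left.mpr hq)
    have hA_unit := (ZMod.coe_int_isUnit_iff_isCoprime A q).mpr hA.symm
    have hb_unit := (ZMod.coe_int_isUnit_iff_isCoprime b q).mpr hb.symm
    have hcard := card_torsionBy_intCast_zmod q (A * C - B ^ 2)
    push_cast at hcard
    have hnorm := norm_quadraticGaussSum_binaryForm_le hψ h2 hA_unit hb_unit B C
      (binaryLinearForm ↑u ↑v)
    rwa [Nat.card_zmod, hcard] at hnorm

/-- Evaluation of the Gauss sum `S = ∑_{x,y mod q} e_q(b f(x,y) + ux + vy)` for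
`q = p^r` an odd prime power, `f = A x² + 2B x y + C y²` with `p ∤ A`, `AC − B² = a²`,
and `gcd(b,p) = 1`: the sum vanishes unless `gcd(a², q) ∣ Av − Bu`, and in all cases
`|S| ≤ q · gcd(a², q)^{1/2}`. -/
theorem gauss_sum_binary_form (p r : ℕ) (hp : p.Prime) (hodd : Odd p) (hr : 1 ≤ r)
    (A B C a b u v : ℤ) (hpA : ¬ (p : ℤ) ∣ A) (ha : a ≠ 0)
    (hdisc : A * C - B ^ 2 = a ^ 2) (hb : Int.gcd b p = 1) :
    (¬ ((Int.gcd (a ^ 2) ((p : ℤ) ^ r) : ℤ) ∣ A * v - B * u) →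
        (∑ x ∈ Finset.range (p ^ r), ∑ y ∈ Finset.range (p ^ r),
          eChar (p ^ r) (b * (A * (x : ℤ) ^ 2 + 2 * B * x * y + C * y ^ 2)
            + u * x + v * y)) = 0) ∧
      ‖(∑ x ∈ Finset.range (p ^ r), ∑ y ∈ Finset.range (p ^ r),
          eChar (p ^ r) (b * (A * (x : ℤ) ^ 2 + 2 * B * x * y + C * y ^ 2)
            + u * x + v * y))‖
        ≤ ((p : ℝ) ^ r) * Real.sqrt (Int.gcd (a ^ 2) ((p : ℤ) ^ r)) := by
  have : NeZero (p ^ r) := ⟨pow_ne_zero r hp.ne_zero⟩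
  have hA : IsCoprime A ((p : ℤ) ^ r) :=
    ((Nat.prime_iff_prime_int.mp hp).coprime_iff_not_dvd.mpr hpA).symm.pow_right
  have hb' : IsCoprime b ((p : ℤ) ^ r) := (Int.isCoprime_iff_gcd_eq_one.mpr hb).pow_right
  have hgeneral := gauss_sum_binary_form_general (p ^ r) A B C b u v
  push_cast [hdisc] at hgeneral
  exact hgeneral.imp_right fun hbound => hbound hodd.pow hA hb'
end

section
/- There is an absolute constant C (one may take C = 2) such that for every prime p, every integer r ≥ 1 with q = p^r, and all integers c, d: |∑_{b=1, gcd(b,p)=1}^{q} e_q(c b + d b*)| ≤ C · q^{3/4} · gcd(q, c, d)^{1/4}, where b* denotes the multiplicative inverse of b modulo q. -/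
/-!
Write `K(a, b)` for the Kloosterman sum of a finite commutative ring `R` and a primitive additive
character. Substituting `u ↦ w u` shows `K(a w, b w⁻¹) = K(a, b)` for every unit `w`, and both
estimates exploit this invariance.

* Averaging over `w = 1 + e t` with `e² = 0` restricts `K(a, b)` to the stationary points
  `e (a u - b u⁻¹) = 0`. When divisibility in `R` is total, as in `ℤ/p^r`, those points are few,
  since `x + y = 2 u` with `u` a unit forces `x ∣ 2` or `y ∣ 2`. With `e = p^⌈r/2⌉` this settles
  `r ≥ 2`, apart from small powers of two, for which the trivial bound suffices.
* Over a finite field, the orbit of `(a, b)` under `(a w, b w⁻¹)` contributes to the fourth moment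
  of `K` as many times as there are units (Kloosterman's argument). The moment counts the solutions
  of `x + y = z + w`, `x⁻¹ + y⁻¹ = z⁻¹ + w⁻¹`, all of which are degenerate.

A common divisor `m` of `q`, `c` and `d` is removed by passing to the modulus `q / m`, at the cost
of a factor at most `m`.
-/

open Finset

section Definition

variable {R : Type*} [CommRing R] [Fintype Rˣ]

/-- The Kloosterman sum of the additive character `ψ` at `a, b`; the classical sum modulo `q` is
the case `ψ = ZMod.stdAddChar`. -/
noncomputable def kloostermanSum (ψ : AddChar R ℂ) (a b : R) : ℂ :=
  ∑ u : Rˣ, ψ (a * u + b * (u⁻¹ : Rˣ))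

lemma kloostermanSum_comm (ψ : AddChar R ℂ) (a b : R) :
    kloostermanSum ψ a b = kloostermanSum ψ b a :=
  Fintype.sum_equiv (Equiv.inv Rˣ) _ _ fun u => by
    rw [Equiv.inv_apply, inv_inv, add_comm]

lemma kloostermanSum_mul_units (ψ : AddChar R ℂ) (a b : R) (w : Rˣ) :
    kloostermanSum ψ (a * w) (b * (w⁻¹ : Rˣ)) = kloostermanSum ψ a b :=
  Fintype.sum_equiv (Equiv.mulLeft w) _ _ fun u => by
    simp only [Equiv.coe_mulLeft, mul_inv, Units.val_mul, mul_assoc]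

lemma norm_kloostermanSum_le_card_units [Finite R] (ψ : AddChar R ℂ) (a b : R) :
    ‖kloostermanSum ψ a b‖ ≤ Fintype.card Rˣ :=
  (norm_sum_le _ _).trans_eq <| by simp only [AddChar.norm_apply, sum_const, card_univ, nsmul_one]

end Definition

section StationaryPhase

variable {R : Type*} [CommRing R]

lemma kloostermanSum_eq_sum_mul_of_mul_self_eq_zero [Fintype Rˣ] (ψ : AddChar R ℂ) (a b t : R)
    {e : R} (he : e * e = 0) :
    kloostermanSum ψ a b =
      ∑ u : Rˣ, ψ (a * u + b * (u⁻¹ : Rˣ)) * ψ (t * (e * (a * u - b * (u⁻¹ : Rˣ)))) := by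
  let w : Rˣ := ⟨1 + e * t, 1 - e * t, by linear_combination (-t ^ 2) * he,
    by linear_combination (-t ^ 2) * he⟩
  have hw : (w : R) = 1 + e * t := rfl
  have hw_inv : ((w⁻¹ : Rˣ) : R) = 1 - e * t := rfl
  rw [← kloostermanSum_mul_units ψ a b w, kloostermanSum, hw, hw_inv]
  refine sum_congr rfl fun u _ => ?_
  rw [← AddChar.map_add_eq_mul]
  congr 1
  ring

lemma dvd_two_or_dvd_two_of_add_eq_two_mul [PreValuationRing R] {x y : R} (u : Rˣ)
    (h : x + y = 2 * u) : x ∣ 2 ∨ y ∣ 2 := by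
  have dvd_two {z : R} (hz : z ∣ x + y) : z ∣ 2 := Units.dvd_mul_right.1 (h ▸ hz)
  rcases ValuationRing.dvd_total x y with hxy | hyx
  · exact .inl (dvd_two (dvd_add dvd_rfl hxy))
  · exact .inr (dvd_two (dvd_add hyx dvd_rfl))

variable [Fintype R] [DecidableEq R]

theorem kloostermanSum_eq_sum_stationary {ψ : AddChar R ℂ} (hψ : ψ.IsPrimitive) (a b : R)
    {e : R} (he : e * e = 0) :
    kloostermanSum ψ a b =
      ∑ u : Rˣ with e * (a * u - b * (u⁻¹ : Rˣ)) = 0, ψ (a * u + b * (u⁻¹ : Rˣ)) := by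
  have hcard : (Fintype.card R : ℂ) ≠ 0 := Nat.cast_ne_zero.2 Fintype.card_ne_zero
  refine mul_left_cancel₀ hcard ?_
  calc (Fintype.card R : ℂ) * kloostermanSum ψ a b
      = ∑ t : R, ∑ u : Rˣ,
          ψ (a * u + b * (u⁻¹ : Rˣ)) * ψ (t * (e * (a * u - b * (u⁻¹ : Rˣ)))) := by
        simp only [← kloostermanSum_eq_sum_mul_of_mul_self_eq_zero ψ a b _ he, sum_const,
          card_univ, nsmul_eq_mul]
    _ = ∑ u : Rˣ, ψ (a * u + b * (u⁻¹ : Rˣ)) *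
          if e * (a * u - b * (u⁻¹ : Rˣ)) = 0 then (Fintype.card R : ℂ) else 0 := by
        rw [sum_comm]
        simp only [← mul_sum, AddChar.sum_mulShift _ hψ, Nat.cast_ite, Nat.cast_zero]
    _ = _ := by
        simp only [mul_ite, mul_zero, ← sum_filter, ← sum_mul]
        exact mul_comm _ _

lemma norm_kloostermanSum_le_card_stationary {ψ : AddChar R ℂ} (hψ : ψ.IsPrimitive) (a b : R)
    {e : R} (he : e * e = 0) :
    ‖kloostermanSum ψ a b‖ ≤ #{u : Rˣ | e * (a * u - b * (u⁻¹ : Rˣ)) = 0} := by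
  rw [kloostermanSum_eq_sum_stationary hψ a b he]
  exact (norm_sum_le _ _).trans_eq <| by simp only [AddChar.norm_apply, sum_const, nsmul_one]

variable [PreValuationRing R]

lemma card_stationary_le_two_mul_card_annihilator {a : R} (ha : IsUnit a) (b e : R) :
    #{u : Rˣ | e * (a * u - b * (u⁻¹ : Rˣ)) = 0} ≤ 2 * #{x : R | 2 * e * x = 0} := by
  set S : Finset Rˣ := {u | e * (a * u - b * (u⁻¹ : Rˣ)) = 0}
  set T : Finset R := {x | 2 * e * x = 0} with hT
  rcases S.eq_empty_or_nonempty with hempty | ⟨v, hv⟩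
  · simp [hempty]
  have mul_sq_sub {u : Rˣ} (hu : u ∈ S) : e * (a * (u : R) ^ 2 - b) = 0 := by
    linear_combination (u : R) * (mem_filter.1 hu).2 + e * b * u.mul_inv
  have cover : S ⊆ ({u | (u - v : R) ∈ T} : Finset Rˣ) ∪ ({u | (u + v : R) ∈ T} : Finset Rˣ) := by
    intro u hu
    have hprod : e * ((u - v) * (u + v)) = 0 := by
      rw [← ha.mul_right_eq_zero]
      linear_combination mul_sq_sub hu - mul_sq_sub hv
    simp only [hT, mem_union, mem_filter, mem_univ, true_and]
    rcases dvd_two_or_dvd_two_of_add_eq_two_mul (x := (u - v : R)) (y := (u + v : R)) u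
        (by ring) with ⟨k, hk⟩ | ⟨k, hk⟩
    · right
      linear_combination k * hprod + e * (u + v) * hk
    · left
      linear_combination k * hprod + e * (u - v) * hk
  have card_sub_le : #{u : Rˣ | (u - v : R) ∈ T} ≤ #T :=
    card_le_card_of_injOn (fun u => (u - v : R)) (by simp [Set.MapsTo])
      (fun _ _ _ _ h => Units.ext (sub_left_injective h))
  have card_add_le : #{u : Rˣ | (u + v : R) ∈ T} ≤ #T :=
    card_le_card_of_injOn (fun u => (u + v : R)) (by simp [Set.MapsTo])
      (fun _ _ _ _ h => Units.ext (add_left_injective _ h))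
  grw [cover, card_union_le, card_sub_le, card_add_le, two_mul]

theorem norm_kloostermanSum_le_two_mul_card_annihilator {ψ : AddChar R ℂ} (hψ : ψ.IsPrimitive)
    {a b e : R} (hab : IsUnit a ∨ IsUnit b) (he : e * e = 0) :
    ‖kloostermanSum ψ a b‖ ≤ 2 * #{x : R | 2 * e * x = 0} := by
  wlog ha : IsUnit a generalizing a b
  · rw [kloostermanSum_comm]
    exact this hab.symm (hab.resolve_left ha)
  exact (norm_kloostermanSum_le_card_stationary hψ a b he).trans <| by
    exact_mod_cast card_stationary_le_two_mul_card_annihilator ha b e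

end StationaryPhase

section FourthMoment

lemma sum_prod_addChar_eq_ite {R : Type*} [CommRing R] [Fintype R] [DecidableEq R]
    {ψ : AddChar R ℂ} (hψ : ψ.IsPrimitive) (x : R × R) :
    ∑ c : R × R, ψ (c.1 * x.1 + c.2 * x.2) = if x = 0 then (Fintype.card R : ℂ) ^ 2 else 0 := by
  simp only [Fintype.sum_prod_type, AddChar.map_add_eq_mul, ← sum_mul_sum,
    AddChar.sum_mulShift _ hψ, Prod.ext_iff, Prod.fst_zero, Prod.snd_zero]
  split_ifs <;> simp_all [sq]

theorem sum_norm_sum_addChar_sq {R : Type*} [CommRing R] [Fintype R] [DecidableEq R]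
    {ψ : AddChar R ℂ} (hψ : ψ.IsPrimitive) {ι : Type*} [Fintype ι] (f : ι → R × R) :
    ∑ c : R × R, ‖∑ i, ψ (c.1 * (f i).1 + c.2 * (f i).2)‖ ^ 2 =
      (Fintype.card R : ℝ) ^ 2 * #{ij : ι × ι | f ij.1 = f ij.2} := by
  have expand (c : R × R) : ((‖∑ i, ψ (c.1 * (f i).1 + c.2 * (f i).2)‖ ^ 2 : ℝ) : ℂ) =
      ∑ ij : ι × ι, ψ (c.1 * (f ij.1 - f ij.2).1 + c.2 * (f ij.1 - f ij.2).2) := by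
    rw [Complex.ofReal_pow, ← Complex.mul_conj', map_sum, sum_mul_sum, Fintype.sum_prod_type]
    refine sum_congr rfl fun i _ => sum_congr rfl fun j _ => ?_
    rw [← AddChar.map_neg_eq_conj, ← AddChar.map_add_eq_mul, Prod.fst_sub, Prod.snd_sub]
    congr 1
    ring
  apply Complex.ofReal_injective
  rw [Complex.ofReal_sum, sum_congr rfl fun c _ => expand c, sum_comm]
  simp only [sum_prod_addChar_eq_ite hψ, sub_eq_zero, ← sum_filter, sum_const, nsmul_eq_mul]
  push_cast
  ring

lemma neg_eq_or_eq_or_eq_of_add_eq_of_inv_add_inv_eq {R : Type*} [CommRing R]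
    [IsDomain R] {x y z w : Rˣ} (h : (x + y : R) = z + w)
    (h_inv : ((x⁻¹ : Rˣ) + (y⁻¹ : Rˣ) : R) = (z⁻¹ : Rˣ) + (w⁻¹ : Rˣ)) :
    (-x = y ∧ -z = w) ∨ (x = z ∧ y = w) ∨ (x = w ∧ y = z) := by
  have cleared : (x + y : R) * (z * w) = (z + w) * (x * y) := by
    linear_combination (x * y * z * w : R) * h_inv - (y * z * w : R) * x.mul_inv
      - (x * z * w : R) * y.mul_inv + (x * y * w : R) * z.mul_inv + (x * y * z : R) * w.mul_inv
  have factored : (x + y : R) * ((z - x) * (z - y)) = 0 := by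
    linear_combination (x * y - z * (x + y) : R) * h - cleared
  rcases mul_eq_zero.1 factored with hxy | hz
  · exact .inl ⟨Units.ext (by rw [Units.val_neg]; linear_combination -hxy),
      Units.ext (by rw [Units.val_neg]; linear_combination h - hxy)⟩
  rcases mul_eq_zero.1 hz with hzx | hzy
  · exact .inr (.inl ⟨Units.ext (by linear_combination -hzx),
      Units.ext (by linear_combination h + hzx)⟩)
  · exact .inr (.inr ⟨Units.ext (by linear_combination h + hzy),
      Units.ext (by linear_combination -hzy)⟩)

variable {R : Type*} [CommRing R] [Fintype R] [DecidableEq R]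

theorem sum_norm_kloostermanSum_pow_four {ψ : AddChar R ℂ} (hψ : ψ.IsPrimitive) :
    ∑ c : R × R, ‖kloostermanSum ψ c.1 c.2‖ ^ 4 =
      (Fintype.card R : ℝ) ^ 2 * #{v : (Rˣ × Rˣ) × (Rˣ × Rˣ) |
        ((v.1.1 + v.1.2 : R), ((v.1.1⁻¹ : Rˣ) + (v.1.2⁻¹ : Rˣ) : R)) =
          ((v.2.1 + v.2.2 : R), ((v.2.1⁻¹ : Rˣ) + (v.2.2⁻¹ : Rˣ) : R))} := by
  rw [← sum_norm_sum_addChar_sq hψ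
    fun x : Rˣ × Rˣ => ((x.1 + x.2 : R), ((x.1⁻¹ : Rˣ) + (x.2⁻¹ : Rˣ) : R))]
  refine sum_congr rfl fun c _ => ?_
  have square : kloostermanSum ψ c.1 c.2 ^ 2 = ∑ x : Rˣ × Rˣ,
      ψ (c.1 * (x.1 + x.2) + c.2 * ((x.1⁻¹ : Rˣ) + (x.2⁻¹ : Rˣ))) := by
    rw [sq, kloostermanSum, sum_mul_sum, Fintype.sum_prod_type]
    refine sum_congr rfl fun x _ => sum_congr rfl fun y _ => ?_
    rw [← AddChar.map_add_eq_mul]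
    congr 1
    ring
  rw [← square, norm_pow, ← pow_mul]

lemma card_units_mul_norm_kloostermanSum_pow_le_sum (ψ : AddChar R ℂ) {a b : R}
    (hab : IsUnit a ∨ IsUnit b) (n : ℕ) :
    Fintype.card Rˣ * ‖kloostermanSum ψ a b‖ ^ n ≤
      ∑ c : R × R, ‖kloostermanSum ψ c.1 c.2‖ ^ n := by
  let orbit (w : Rˣ) : R × R := (a * w, b * (w⁻¹ : Rˣ))
  have orbit_injective : Function.Injective orbit := by
    intro v w hvw
    obtain ⟨hfst, hsnd⟩ := Prod.ext_iff.1 hvw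
    rcases hab with ha | hb
    · exact Units.ext (ha.mul_left_cancel hfst)
    · exact inv_injective (Units.ext (hb.mul_left_cancel hsnd))
  calc Fintype.card Rˣ * ‖kloostermanSum ψ a b‖ ^ n
      = ∑ w : Rˣ, ‖kloostermanSum ψ (orbit w).1 (orbit w).2‖ ^ n := by
        simp only [orbit, kloostermanSum_mul_units, sum_const, card_univ, nsmul_eq_mul]
    _ = ∑ c ∈ univ.image orbit, ‖kloostermanSum ψ c.1 c.2‖ ^ n :=
        by rw [sum_image fun _ _ _ _ h => orbit_injective h]
    _ ≤ _ := sum_le_sum_of_subset_of_nonneg (subset_univ _) fun _ _ _ => by positivity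

lemma card_add_eq_and_inv_add_inv_eq_le [IsDomain R] :
    #{v : (Rˣ × Rˣ) × (Rˣ × Rˣ) |
      ((v.1.1 + v.1.2 : R), ((v.1.1⁻¹ : Rˣ) + (v.1.2⁻¹ : Rˣ) : R)) =
        ((v.2.1 + v.2.2 : R), ((v.2.1⁻¹ : Rˣ) + (v.2.2⁻¹ : Rˣ) : R))} ≤
      3 * Fintype.card Rˣ ^ 2 := by
  have card_image_le_sq (f : Rˣ × Rˣ → (Rˣ × Rˣ) × (Rˣ × Rˣ)) :
      #(univ.image f) ≤ Fintype.card Rˣ ^ 2 :=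
    card_image_le.trans_eq <| by rw [card_univ, Fintype.card_prod, sq]
  let opposite (v : Rˣ × Rˣ) := ((v.1, -v.1), (v.2, -v.2))
  let parallel (v : Rˣ × Rˣ) := (v, v)
  let swapped (v : Rˣ × Rˣ) := (v, v.swap)
  calc _ ≤ #(univ.image opposite ∪ (univ.image parallel ∪ univ.image swapped)) := by
        refine card_le_card ?_
        rintro ⟨⟨x, y⟩, ⟨z, w⟩⟩ hv
        obtain ⟨h, h_inv⟩ : (x + y : R) = z + w ∧
            ((x⁻¹ : Rˣ) + (y⁻¹ : Rˣ) : R) = (z⁻¹ : Rˣ) + (w⁻¹ : Rˣ) :=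
          Prod.ext_iff.1 (mem_filter.1 hv).2
        clear hv
        simp only [mem_union, mem_image, mem_univ, true_and]
        rcases neg_eq_or_eq_or_eq_of_add_eq_of_inv_add_inv_eq h h_inv with
          ⟨rfl, rfl⟩ | ⟨rfl, rfl⟩ | ⟨rfl, rfl⟩
        · exact .inl ⟨(x, z), rfl⟩
        · exact .inr (.inl ⟨(x, y), rfl⟩)
        · exact .inr (.inr ⟨(x, y), rfl⟩)
    _ ≤ _ := by
        grw [card_union_le, card_union_le, card_image_le_sq, card_image_le_sq, card_image_le_sq]
        exact le_of_eq (by ring)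

theorem norm_kloostermanSum_pow_four_le_of_isDomain [IsDomain R] {ψ : AddChar R ℂ}
    (hψ : ψ.IsPrimitive) {a b : R} (hab : IsUnit a ∨ IsUnit b) :
    ‖kloostermanSum ψ a b‖ ^ 4 ≤ 3 * (Fintype.card R : ℝ) ^ 2 * Fintype.card Rˣ := by
  have hpos : (0 : ℝ) < Fintype.card Rˣ := Nat.cast_pos.2 Fintype.card_pos
  refine le_of_mul_le_mul_left ?_ hpos
  calc (Fintype.card Rˣ : ℝ) * ‖kloostermanSum ψ a b‖ ^ 4
      ≤ ∑ c : R × R, ‖kloostermanSum ψ c.1 c.2‖ ^ 4 :=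
        card_units_mul_norm_kloostermanSum_pow_le_sum ψ hab 4
    _ ≤ (Fintype.card R : ℝ) ^ 2 * (3 * Fintype.card Rˣ ^ 2 : ℕ) := by
        rw [sum_norm_kloostermanSum_pow_four hψ]
        gcongr
        exact card_add_eq_and_inv_add_inv_eq_le
    _ = _ := by push_cast; ring

end FourthMoment

section PrimePower

lemma preValuationRing_zmod_prime_pow {p : ℕ} (hp : p.Prime) (r : ℕ) :
    PreValuationRing (ZMod (p ^ r)) := by
  refine PreValuationRing.iff_dvd_total.2 ⟨fun x y => ?_⟩
  obtain ⟨_, hi, u, hu, rfl⟩ := ZMod.eq_unit_mul_divisor x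
  obtain ⟨_, hj, v, hv, rfl⟩ := ZMod.eq_unit_mul_divisor y
  obtain ⟨i, -, rfl⟩ := (Nat.dvd_prime_pow hp).1 hi
  obtain ⟨j, -, rfl⟩ := (Nat.dvd_prime_pow hp).1 hj
  simp only [hu.mul_left_dvd, hv.mul_left_dvd, hu.dvd_mul_left, hv.dvd_mul_left]
  exact (le_total i j).imp (fun h => Nat.cast_dvd_cast (pow_dvd_pow p h))
    fun h => Nat.cast_dvd_cast (pow_dvd_pow p h)

lemma card_natCast_mul_eq_zero_le (N : ℕ) [NeZero N] {m : ℕ} (hm : 0 < m) :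
    #{x : ZMod N | (m : ZMod N) * x = 0} ≤ m := by
  simpa only [nsmul_eq_mul] using IsAddCyclic.card_nsmul_eq_zero_le (α := ZMod N) hm

section

variable {N m : ℕ} [NeZero N] [PreValuationRing (ZMod N)] {a b : ZMod N}

lemma norm_kloostermanSum_le_four_mul (hab : IsUnit a ∨ IsUnit b) (hm : 0 < m)
    (hN : N ∣ m * m) : ‖kloostermanSum ZMod.stdAddChar a b‖ ≤ 4 * m := by
  have he : (m : ZMod N) * m = 0 := by exact_mod_cast (ZMod.natCast_eq_zero_iff _ _).2 hN
  have hcard : #{x : ZMod N | 2 * (m : ZMod N) * x = 0} ≤ 2 * m := by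
    exact_mod_cast card_natCast_mul_eq_zero_le N (mul_pos two_pos hm)
  calc ‖kloostermanSum ZMod.stdAddChar a b‖ ≤ 2 * #{x : ZMod N | 2 * (m : ZMod N) * x = 0} :=
        norm_kloostermanSum_le_two_mul_card_annihilator (ZMod.isPrimitive_stdAddChar N) hab he
    _ ≤ 2 * (2 * m : ℕ) := by gcongr
    _ = 4 * m := by push_cast; ring

lemma norm_kloostermanSum_le_two_mul_of_odd (hodd : Odd N) (hab : IsUnit a ∨ IsUnit b)
    (hm : 0 < m) (hN : N ∣ m * m) : ‖kloostermanSum ZMod.stdAddChar a b‖ ≤ 2 * m := by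
  have he : (m : ZMod N) * m = 0 := by exact_mod_cast (ZMod.natCast_eq_zero_iff _ _).2 hN
  have htwo : IsUnit (2 : ZMod N) :=
    (ZMod.isUnit_iff_coprime 2 N).2 (Nat.coprime_two_left.2 hodd)
  have hcard : #{x : ZMod N | 2 * (m : ZMod N) * x = 0} ≤ m := by
    simpa only [mul_assoc, htwo.mul_right_eq_zero] using card_natCast_mul_eq_zero_le N hm
  grw [norm_kloostermanSum_le_two_mul_card_annihilator (ZMod.isPrimitive_stdAddChar N) hab he,
    hcard]

end

lemma norm_kloostermanSum_two_pow_pow_four_le {r : ℕ} {a b : ZMod (2 ^ r)}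
    (hab : IsUnit a ∨ IsUnit b) :
    ‖kloostermanSum ZMod.stdAddChar a b‖ ^ 4 ≤ 16 * ((2 : ℝ) ^ r) ^ 3 := by
  have of_le_two_pow {n : ℕ} (hn : n * 4 ≤ 4 + r * 3)
      (hle : ‖kloostermanSum ZMod.stdAddChar a b‖ ≤ 2 ^ n) :
      ‖kloostermanSum ZMod.stdAddChar a b‖ ^ 4 ≤ 16 * ((2 : ℝ) ^ r) ^ 3 :=
    calc ‖kloostermanSum ZMod.stdAddChar a b‖ ^ 4 ≤ ((2 : ℝ) ^ n) ^ 4 := by gcongr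
      _ = 2 ^ (n * 4) := (pow_mul ..).symm
      _ ≤ 2 ^ (4 + r * 3) := pow_le_pow_right₀ one_le_two hn
      _ = 16 * ((2 : ℝ) ^ r) ^ 3 := by rw [pow_add, pow_mul]; norm_num
  rcases le_or_gt r 8 with hsmall | hlarge
  · refine of_le_two_pow (n := r - 1) (by omega) ?_
    grw [norm_kloostermanSum_le_card_units, ZMod.card_units_eq_totient]
    cases r with
    | zero => simp
    | succ s => simp [Nat.totient_prime_pow_succ Nat.prime_two]
  · have := preValuationRing_zmod_prime_pow Nat.prime_two r
    refine of_le_two_pow (n := (r + 1) / 2 + 2) (by omega) ?_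
    have hdvd : 2 ^ r ∣ 2 ^ ((r + 1) / 2) * 2 ^ ((r + 1) / 2) := by
      rw [← pow_add]
      exact pow_dvd_pow 2 (by omega)
    grw [norm_kloostermanSum_le_four_mul hab (by positivity) hdvd]
    push_cast
    exact le_of_eq (by ring)

lemma norm_kloostermanSum_odd_prime_pow_pow_four_le {p r : ℕ} [NeZero (p ^ r)] (hp : p.Prime)
    (hodd : Odd p) {a b : ZMod (p ^ r)} (hab : IsUnit a ∨ IsUnit b) (hr : r ≠ 1) :
    ‖kloostermanSum ZMod.stdAddChar a b‖ ^ 4 ≤ 16 * ((p : ℝ) ^ r) ^ 3 := by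
  have := preValuationRing_zmod_prime_pow hp r
  have hp_one : (1 : ℝ) ≤ p := mod_cast hp.one_le
  have hdvd : p ^ r ∣ p ^ ((r + 1) / 2) * p ^ ((r + 1) / 2) := by
    rw [← pow_add]
    exact pow_dvd_pow p (by omega)
  calc ‖kloostermanSum ZMod.stdAddChar a b‖ ^ 4 ≤ (2 * (p ^ ((r + 1) / 2) : ℕ)) ^ 4 := by
        grw [norm_kloostermanSum_le_two_mul_of_odd hodd.pow hab (pow_pos hp.pos _) hdvd]
    _ = 16 * (p : ℝ) ^ ((r + 1) / 2 * 4) := by push_cast; ring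
    _ ≤ 16 * (p : ℝ) ^ (r * 3) :=
        mul_le_mul_of_nonneg_left (pow_le_pow_right₀ hp_one (by omega)) (by norm_num)
    _ = 16 * ((p : ℝ) ^ r) ^ 3 := by rw [pow_mul]

theorem norm_kloostermanSum_prime_pow_pow_four_le {p r : ℕ} [NeZero (p ^ r)] (hp : p.Prime)
    {a b : ZMod (p ^ r)} (hab : IsUnit a ∨ IsUnit b) :
    ‖kloostermanSum ZMod.stdAddChar a b‖ ^ 4 ≤ 16 * ((p : ℝ) ^ r) ^ 3 := by
  obtain rfl | hr := eq_or_ne r 1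
  · have : Fact (p ^ 1).Prime := ⟨by rwa [pow_one]⟩
    have hunits : (Fintype.card (ZMod (p ^ 1))ˣ : ℝ) ≤ (p : ℝ) ^ 1 := by
      rw [ZMod.card_units_eq_totient]
      exact_mod_cast Nat.totient_le _
    grw [norm_kloostermanSum_pow_four_le_of_isDomain (ZMod.isPrimitive_stdAddChar _) hab, hunits,
      ZMod.card]
    push_cast
    nlinarith [pow_pos (Nat.cast_pos (α := ℝ).2 hp.pos) 3]
  rcases hp.eq_two_or_odd' with rfl | hodd
  · exact_mod_cast norm_kloostermanSum_two_pow_pow_four_le hab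
  · exact norm_kloostermanSum_odd_prime_pow_pow_four_le hp hodd hab hr

end PrimePower

section CommonDivisor

lemma card_mul_sum_comp_of_surjective {G H M : Type*} [Group G] [Group H] [Fintype G] [Fintype H]
    [CommSemiring M] {f : G →* H} (hf : Function.Surjective f) (F : H → M) :
    Fintype.card H * ∑ g, F (f g) = Fintype.card G * ∑ h, F h := by
  have translate (h : H) : ∑ g, F (f g) = ∑ g, F (f g * h) := by
    obtain ⟨k, rfl⟩ := hf h
    exact (Fintype.sum_equiv (Equiv.mulRight k) _ _ fun g => by simp).symm
  calc (Fintype.card H : M) * ∑ g, F (f g) = ∑ h : H, ∑ g, F (f g * h) := by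
        simp only [← translate, sum_const, card_univ, nsmul_eq_mul]
    _ = ∑ g : G, ∑ h, F h := by
        rw [sum_comm]
        exact sum_congr rfl fun g _ => Equiv.sum_comp (Equiv.mulLeft (f g)) F
    _ = Fintype.card G * ∑ h, F h := by rw [sum_const, card_univ, nsmul_eq_mul]

lemma card_units_mul_kloostermanSum_comp {R S : Type*} [CommRing R] [CommRing S] [Fintype Rˣ]
    [Fintype Sˣ] {f : R →+* S} (hf : Function.Surjective (Units.map (f : R →* S)))
    (ψ : AddChar S ℂ) (a b : R) :
    Fintype.card Sˣ * kloostermanSum (ψ.compAddMonoidHom f.toAddMonoidHom) a b =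
      Fintype.card Rˣ * kloostermanSum ψ (f a) (f b) := by
  rw [kloostermanSum, kloostermanSum, ← card_mul_sum_comp_of_surjective hf]
  simp [← map_inv]

lemma totient_mul_le (m n : ℕ) : (m * n).totient ≤ m * n.totient := by
  induction m using induction_on_primes with
  | zero => simp
  | one => simp
  | prime_mul p m hp ih =>
    rw [mul_assoc, mul_assoc]
    refine le_trans ?_ (Nat.mul_le_mul_left p ih)
    by_cases hdvd : p ∣ m * n
    · rw [Nat.totient_mul_of_prime_of_dvd hp hdvd]
    · rw [Nat.totient_mul_of_prime_of_not_dvd hp hdvd]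
      exact Nat.mul_le_mul_right _ (Nat.sub_le p 1)

lemma stdAddChar_mul_eq_stdAddChar_castHom {m n : ℕ} [NeZero (m * n)] [NeZero n]
    (x : ZMod (m * n)) : ZMod.stdAddChar ((m : ZMod (m * n)) * x) =
      ZMod.stdAddChar (ZMod.castHom (dvd_mul_left n m) (ZMod n) x) := by
  obtain ⟨k, rfl⟩ := ZMod.intCast_surjective x
  have hm : (m : ℂ) ≠ 0 := Nat.cast_ne_zero.2 (left_ne_zero_of_mul (NeZero.ne (m * n)))
  rw [map_intCast, show (m : ZMod (m * n)) * k = ((m * k : ℤ) : ZMod (m * n)) by push_cast; rfl,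
    ZMod.stdAddChar_coe, ZMod.stdAddChar_coe]
  congr 1
  push_cast
  field_simp

theorem norm_kloostermanSum_mul_le {N m n : ℕ} [NeZero N] [NeZero n] (hN : N = m * n) (c d : ℤ) :
    ‖kloostermanSum ZMod.stdAddChar ((m * c : ℤ) : ZMod N) (m * d : ℤ)‖ ≤
      m * ‖kloostermanSum ZMod.stdAddChar (c : ZMod n) d‖ := by
  subst hN
  have hdvd : n ∣ m * n := dvd_mul_left n m
  have hn : (0 : ℝ) < n.totient := mod_cast Nat.totient_pos.2 (NeZero.pos n)
  have reduce : kloostermanSum ZMod.stdAddChar ((m * c : ℤ) : ZMod (m * n)) (m * d : ℤ) =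
      kloostermanSum (ZMod.stdAddChar.compAddMonoidHom (ZMod.castHom hdvd (ZMod n)).toAddMonoidHom)
        (c : ZMod (m * n)) d := by
    refine sum_congr rfl fun u _ => ?_
    refine Eq.trans ?_ (stdAddChar_mul_eq_stdAddChar_castHom _)
    congr 1
    push_cast
    ring
  have descend := congrArg norm <| card_units_mul_kloostermanSum_comp
    (ZMod.unitsMap_surjective hdvd) ZMod.stdAddChar (c : ZMod (m * n)) d
  rw [← reduce, map_intCast, map_intCast, norm_mul, norm_mul, Complex.norm_natCast,
    Complex.norm_natCast, ZMod.card_units_eq_totient, ZMod.card_units_eq_totient] at descend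
  refine le_of_mul_le_mul_left ?_ hn
  calc _ = ((m * n).totient : ℝ) * ‖kloostermanSum ZMod.stdAddChar (c : ZMod n) d‖ := descend
    _ ≤ (m * n.totient : ℕ) * ‖kloostermanSum ZMod.stdAddChar (c : ZMod n) d‖ := by
        gcongr
        exact totient_mul_le m n
    _ = _ := by push_cast; ring

lemma exists_eq_gcd_mul_and_gcd_eq_one {q : ℕ} (hq : q ≠ 0) (c d : ℤ) :
    ∃ (n : ℕ) (c' d' : ℤ), q = q.gcd (c.gcd d) * n ∧ c = q.gcd (c.gcd d) * c' ∧
      d = q.gcd (c.gcd d) * d' ∧ n.gcd (c'.gcd d') = 1 := by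
  set g := q.gcd (c.gcd d)
  have hg_pos : 0 < g := Nat.gcd_pos_of_pos_left _ (Nat.pos_of_ne_zero hq)
  have hg_dvd : (g : ℤ) ∣ c.gcd d := Int.natCast_dvd_natCast.2 (Nat.gcd_dvd_right _ _)
  obtain ⟨n, hn⟩ : g ∣ q := Nat.gcd_dvd_left _ _
  obtain ⟨c', hc⟩ := hg_dvd.trans (Int.gcd_dvd_left c d)
  obtain ⟨d', hd⟩ := hg_dvd.trans (Int.gcd_dvd_right c d)
  refine ⟨n, c', d', hn, hc, hd, Nat.eq_of_mul_eq_mul_left hg_pos ?_⟩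
  rw [mul_one, ← Nat.gcd_mul_left, ← hn, ← Int.natAbs_natCast g, ← Int.gcd_mul_left, ← hc, ← hd,
    Int.natAbs_natCast]

lemma isUnit_or_isUnit_of_gcd_eq_one {N : ℕ} [PreValuationRing (ZMod N)] {c d : ℤ}
    (h : N.gcd (c.gcd d) = 1) : IsUnit (c : ZMod N) ∨ IsUnit (d : ZMod N) := by
  have isUnit_gcd : IsUnit ((c.gcd d : ℤ) : ZMod N) :=
    (ZMod.coe_int_isUnit_iff_isCoprime _ _).2 (Nat.isCoprime_iff_coprime.2 h)
  have bezout : ((c.gcd d : ℤ) : ZMod N) = c * c.gcdA d + d * c.gcdB d := by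
    exact_mod_cast congrArg (Int.cast (R := ZMod N)) (Int.gcd_eq_gcd_ab c d)
  rw [bezout] at isUnit_gcd
  rcases ValuationRing.dvd_total (c : ZMod N) d with hcd | hdc
  · exact .inl (isUnit_of_dvd_unit (dvd_add (dvd_mul_right _ _) (hcd.mul_right _)) isUnit_gcd)
  · exact .inr (isUnit_of_dvd_unit (dvd_add (hdc.mul_right _) (dvd_mul_right _ _)) isUnit_gcd)

end CommonDivisor

theorem norm_kloostermanSum_intCast_pow_four_le {p r : ℕ} [NeZero (p ^ r)] (hp : p.Prime)
    (c d : ℤ) : ‖kloostermanSum ZMod.stdAddChar (c : ZMod (p ^ r)) d‖ ^ 4 ≤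
      16 * ((p : ℝ) ^ r) ^ 3 * (p ^ r).gcd (c.gcd d) := by
  obtain ⟨n, c', d', hn, hc, hd, hgcd⟩ := exists_eq_gcd_mul_and_gcd_eq_one (NeZero.ne (p ^ r)) c d
  set g := (p ^ r).gcd (c.gcd d)
  obtain ⟨s, -, rfl⟩ := (Nat.dvd_prime_pow hp).1 (Dvd.intro_left g hn.symm)
  have : NeZero (p ^ s) := ⟨pow_ne_zero s hp.ne_zero⟩
  have := preValuationRing_zmod_prime_pow hp s
  have hcast : (p : ℝ) ^ r = g * p ^ s := mod_cast hn
  calc ‖kloostermanSum ZMod.stdAddChar (c : ZMod (p ^ r)) d‖ ^ 4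
      ≤ (g * ‖kloostermanSum ZMod.stdAddChar (c' : ZMod (p ^ s)) d'‖) ^ 4 := by
        rw [hc, hd]
        gcongr
        exact norm_kloostermanSum_mul_le hn c' d'
    _ = g ^ 4 * ‖kloostermanSum ZMod.stdAddChar (c' : ZMod (p ^ s)) d'‖ ^ 4 := mul_pow ..
    _ ≤ g ^ 4 * (16 * ((p : ℝ) ^ s) ^ 3) := by
        gcongr
        exact norm_kloostermanSum_prime_pow_pow_four_le hp (isUnit_or_isUnit_of_gcd_eq_one hgcd)
    _ = 16 * ((p : ℝ) ^ r) ^ 3 * g := by rw [hcast]; ring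

section Classical

variable (N : ℕ) [NeZero N]

lemma sum_coprime_Icc_eq_sum_units {M : Type*} [AddCommMonoid M] (f : ZMod N → M) :
    ∑ b ∈ Icc 1 N with b.Coprime N, f b = ∑ u : (ZMod N)ˣ, f u := by
  have hcop {b : ℕ} (hb : b ∈ {b ∈ Icc 1 N | b.Coprime N}) : b.Coprime N := (mem_filter.1 hb).2
  -- Representatives in `[1, N]`, rather than `[0, N - 1]`, are `(x - 1).val + 1`.
  have cast_val_succ (x : ZMod N) : (((x - 1).val + 1 : ℕ) : ZMod N) = x := by simp
  refine sum_bij' (fun b hb => ZMod.unitOfCoprime b (hcop hb))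
    (fun u _ => (u - 1 : ZMod N).val + 1) (fun _ _ => mem_univ _) (fun u _ => ?_)
    (fun b hb => ?_) (fun u _ => Units.ext (cast_val_succ u)) (fun _ _ => rfl)
  · rw [mem_filter, mem_Icc, ← ZMod.isUnit_iff_coprime, cast_val_succ]
    exact ⟨⟨Nat.succ_pos _, ZMod.val_lt _⟩, u.isUnit⟩
  · obtain ⟨hb_pos, hb_le⟩ := mem_Icc.1 (mem_filter.1 hb).1
    rw [ZMod.coe_unitOfCoprime, ← Nat.cast_pred hb_pos, ZMod.val_cast_of_lt (by omega)]
    omega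

lemma sum_eChar_eq_kloostermanSum (c d : ℤ) :
    ∑ b ∈ Icc 1 N with b.Coprime N, eChar N (c * b + d * ((b : ZMod N)⁻¹.val : ℤ)) =
      kloostermanSum ZMod.stdAddChar (c : ZMod N) d := by
  have eChar_eq (x : ℤ) : eChar N x = ZMod.stdAddChar (x : ZMod N) := (ZMod.stdAddChar_coe x).symm
  simp only [eChar_eq, kloostermanSum, ← ZMod.inv_coe_unit]
  rw [← sum_coprime_Icc_eq_sum_units N fun x : ZMod N =>
    ZMod.stdAddChar ((c : ZMod N) * x + (d : ZMod N) * x⁻¹)]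
  refine sum_congr rfl fun b _ => ?_
  push_cast
  rw [ZMod.natCast_zmod_val]

end Classical

/-- Elementary Kloosterman sum bound: for `q = p^r`,
`|∑_{(b,p)=1} e_q(cb + d b̄)| ≤ 2 q^{3/4} gcd(q,c,d)^{1/4}`. -/
theorem kloosterman_sum_bound (p : ℕ) (hp : p.Prime) (r : ℕ) (hr : 1 ≤ r) (c d : ℤ) :
    norm (∑ b ∈ (Finset.Icc 1 (p ^ r)).filter (fun b => Nat.gcd b p = 1),
        eChar (p ^ r) (c * b + d * (((b : ZMod (p ^ r))⁻¹).val : ℤ)))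
      ≤ 2 * ((p : ℝ) ^ r) ^ ((3 : ℝ) / 4) *
          ((Nat.gcd (p ^ r) (Int.gcd c d) : ℝ)) ^ ((1 : ℝ) / 4) := by
  have : NeZero (p ^ r) := ⟨pow_ne_zero _ hp.ne_zero⟩
  have hcoprime (b : ℕ) : b.gcd p = 1 ↔ b.Coprime (p ^ r) :=
    (Nat.coprime_pow_right_iff hr b p).symm
  simp only [hcoprime, sum_eChar_eq_kloostermanSum]
  refine le_of_pow_le_pow_left₀ four_ne_zero (by positivity) ?_
  calc _ ≤ 16 * ((p : ℝ) ^ r) ^ 3 * (p ^ r).gcd (c.gcd d) :=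
        norm_kloostermanSum_intCast_pow_four_le hp c d
    _ = _ := by
        rw [mul_pow, mul_pow, ← Real.rpow_mul_natCast (by positivity),
          ← Real.rpow_mul_natCast (by positivity)]
        norm_num
end

section
/- There is an absolute constant C (one may take C = 2) such that for every odd prime p, every integer r ≥ 1 with q = p^r, and all integers c, d: |∑_{b=1, gcd(b,p)=1}^{q} (b/p) · e_q(c b + d b*)| ≤ C · q^{3/4} · gcd(q, c, d)^{1/4}, where (b/p) is the Legendre symbol and b* denotes the multiplicative inverse of b modulo q. -/
/-!
The sum is a Kloosterman sum `K(c, d)` over the units of `ℤ/p^r`, twisted by a character `χ` of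
modulus `p`. Writing `gcd(p^r, c, d) = p^m`, the summand only depends on the unit modulo
`p^(r - m)`, so `K` is `p^m` times a sum modulo `p^s`, `s = r - m`, one of whose parameters is a
unit; there `‖K‖ ≤ 2 p^(3s/4)` is to be shown.

For `s = 1` this is Kloosterman's fourth moment argument. Orthogonality bounds the mean of `‖K‖^4`
over all `(c, d)` by the number of solutions of `x + y = z + w`, `1/x + 1/y = 1/z + 1/w`, all of
which lie on three two-parameter families, while `‖K‖` is constant on the `p - 1` pairs
`(c v, d / v)`.

For `s ≥ 2` take `π = p^t` with `t = ⌈s/2⌉`, so that `π^2 = 0`. Averaging over the substitutions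
`u ↦ (1 + π t) u` leaves only the stationary `u`, those with `π (c u - d / u) = 0`. If `u₀` is one
of them then `π (u + u₀) (u - u₀) = 0`; since divisibility in `ℤ/p^s` is a total order, one of
the two factors may be replaced by the difference `2 u₀` of the factors, which bounds the number
of stationary points by `2 p^t` for odd `p` and by `4 p^t` for `p = 2`. In the latter case small `s`
are left to the trivial bound.
-/

open Finset ComplexConjugate
open DirichletCharacter (changeLevel)

section Kloosterman

variable {R : Type*} [CommRing R]

lemma norm_mulChar_units [Finite Rˣ] (χ : MulChar R ℂ) (u : Rˣ) : ‖χ u‖ = 1 :=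
  IsOfFinOrder.norm_eq_one <|
    ((χ : R →* ℂ).comp (Units.coeHom R)).isOfFinOrder (isOfFinOrder_of_finite u)

variable [Fintype Rˣ]

/-- The Kloosterman sum attached to the additive character `ψ`, twisted by the multiplicative
character `χ`; for a quadratic `χ` this is a Salié sum. Summing over units, rather than over
residues, keeps the junk inverses of non-units out of the sum. -/
noncomputable def twistedKloostermanSum (χ : MulChar R ℂ) (ψ : AddChar R ℂ) (c d : R) : ℂ :=
  ∑ u : Rˣ, χ u * ψ (c * u + d * ↑u⁻¹)

lemma norm_twistedKloostermanSum_le_card_units [Finite R] (χ : MulChar R ℂ) (ψ : AddChar R ℂ)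
    (c d : R) : ‖twistedKloostermanSum χ ψ c d‖ ≤ Fintype.card Rˣ :=
  calc ‖twistedKloostermanSum χ ψ c d‖
      ≤ ∑ u : Rˣ, ‖χ u * ψ (c * u + d * ↑u⁻¹)‖ := norm_sum_le _ _
    _ = Fintype.card Rˣ := by simp [norm_mulChar_units]

lemma mulChar_mul_twistedKloostermanSum (χ : MulChar R ℂ) (ψ : AddChar R ℂ) (c d : R) (v : Rˣ) :
    χ v * twistedKloostermanSum χ ψ (c * v) (d * ↑v⁻¹) = twistedKloostermanSum χ ψ c d := by
  rw [twistedKloostermanSum, mul_sum]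
  refine Fintype.sum_equiv (Equiv.mulLeft v) _ _ fun u => ?_
  simp only [Equiv.coe_mulLeft, mul_inv, Units.val_mul, map_mul, mul_assoc]

lemma norm_twistedKloostermanSum_mul_units (χ : MulChar R ℂ) (ψ : AddChar R ℂ) (c d : R)
    (v : Rˣ) :
    ‖twistedKloostermanSum χ ψ (c * v) (d * ↑v⁻¹)‖ = ‖twistedKloostermanSum χ ψ c d‖ := by
  rw [← mulChar_mul_twistedKloostermanSum χ ψ c d v, norm_mul, norm_mulChar_units, one_mul]

lemma twistedKloostermanSum_sq (χ : MulChar R ℂ) (ψ : AddChar R ℂ) (c d : R) :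
    twistedKloostermanSum χ ψ c d ^ 2 = ∑ x : Rˣ × Rˣ, χ x.1 * χ x.2 *
      ψ (c * (x.1 + x.2) + d * (↑x.1⁻¹ + ↑x.2⁻¹)) := by
  rw [sq, twistedKloostermanSum, Fintype.sum_mul_sum, Fintype.sum_prod_type]
  refine sum_congr rfl fun x _ => sum_congr rfl fun y _ => ?_
  rw [mul_mul_mul_comm, ← ψ.map_add_eq_mul, add_add_add_comm, ← mul_add, ← mul_add]

end Kloosterman

section FourthMoment

lemma sum_prod_norm_sq_sum_addChar_le {R ι : Type*} [CommRing R] [Fintype R] [DecidableEq R]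
    [Fintype ι] {ψ : AddChar R ℂ} (hψ : ψ.IsPrimitive) {w : ι → ℂ} (hw : ∀ i, ‖w i‖ ≤ 1)
    (a b : ι → R) :
    ∑ v : R × R, ‖∑ i, w i * ψ (v.1 * a i + v.2 * b i)‖ ^ 2 ≤
      Fintype.card R ^ 2 * (#{ij : ι × ι | a ij.1 = a ij.2 ∧ b ij.1 = b ij.2} : ℝ) := by
  have expand (v : R × R) : ((‖∑ i, w i * ψ (v.1 * a i + v.2 * b i)‖ ^ 2 : ℝ) : ℂ) =
      ∑ ij : ι × ι, w ij.1 * conj (w ij.2) *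
        (ψ (v.1 * (a ij.1 - a ij.2)) * ψ (v.2 * (b ij.1 - b ij.2))) := by
    rw [Complex.ofReal_pow, ← Complex.mul_conj', map_sum, Fintype.sum_mul_sum,
      Fintype.sum_prod_type]
    refine sum_congr rfl fun i _ => sum_congr rfl fun j _ => ?_
    rw [map_mul, ← AddChar.map_neg_eq_conj, mul_mul_mul_comm, ← ψ.map_add_eq_mul,
      ← ψ.map_add_eq_mul]
    ring_nf
  have orthogonality (x y : R) : ∑ v : R × R, ψ (v.1 * x) * ψ (v.2 * y) =
      if x = 0 ∧ y = 0 then (Fintype.card R : ℂ) ^ 2 else 0 := by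
    rw [Fintype.sum_prod_type, ← Fintype.sum_mul_sum (fun v => ψ (v * x)) fun v => ψ (v * y),
      AddChar.sum_mulShift _ hψ, AddChar.sum_mulShift _ hψ]
    split_ifs <;> simp_all [sq]
  have moment : ((∑ v : R × R, ‖∑ i, w i * ψ (v.1 * a i + v.2 * b i)‖ ^ 2 : ℝ) : ℂ) =
      ∑ ij : ι × ι with a ij.1 = a ij.2 ∧ b ij.1 = b ij.2,
        w ij.1 * conj (w ij.2) * (Fintype.card R : ℂ) ^ 2 := by
    rw [Complex.ofReal_sum, sum_congr rfl fun v _ => expand v, sum_comm, sum_filter]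
    refine sum_congr rfl fun ij _ => ?_
    rw [← mul_sum, orthogonality, mul_ite, mul_zero]
    simp only [sub_eq_zero]
  rw [← Real.norm_of_nonneg (r := ∑ v : R × R, _) (by positivity), ← Complex.norm_real, moment,
    mul_comm, ← nsmul_eq_mul]
  refine norm_sum_le_of_le _ (fun ij _ => ?_) |>.trans_eq (sum_const _)
  rw [norm_mul, norm_mul, RCLike.norm_conj, norm_pow, Complex.norm_natCast]
  exact mul_le_of_le_one_left (by positivity) (mul_le_one₀ (hw _) (norm_nonneg _) (hw _))

variable {F : Type*} [Field F]

lemma eq_neg_or_eq_or_swap_of_add_eq_of_inv_add_inv_eq {x y z w : Fˣ}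
    (hadd : (x + y : F) = z + w) (hinv : (↑x⁻¹ + ↑y⁻¹ : F) = ↑z⁻¹ + ↑w⁻¹) :
    (y = -x ∧ w = -z) ∨ (z = x ∧ w = y) ∨ (z = y ∧ w = x) := by
  have hprod : ((x : F) + y) * ((z - x) * (z - y)) = 0 := by
    simp only [Units.val_inv_eq_inv_val] at hinv
    field_simp at hinv
    linear_combination (x * y - z * (x + y) : F) * hadd - hinv
  simp only [Units.ext_iff, Units.val_neg]
  rcases mul_eq_zero.1 hprod with h | h
  · exact .inl ⟨by linear_combination h, by linear_combination h - hadd⟩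
  rcases mul_eq_zero.1 h with h | h
  · exact .inr (.inl ⟨by linear_combination h, by linear_combination -h - hadd⟩)
  · exact .inr (.inr ⟨by linear_combination h, by linear_combination -h - hadd⟩)

variable [Fintype F] [DecidableEq F]

lemma card_add_eq_and_inv_add_inv_eq_le_s10 :
    #{x : (Fˣ × Fˣ) × (Fˣ × Fˣ) | (x.1.1 + x.1.2 : F) = x.2.1 + x.2.2 ∧
      (↑x.1.1⁻¹ + ↑x.1.2⁻¹ : F) = ↑x.2.1⁻¹ + ↑x.2.2⁻¹} ≤ 3 * Fintype.card Fˣ ^ 2 := by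
  let families : Finset ((Fˣ × Fˣ) × (Fˣ × Fˣ)) :=
    univ.image (fun u : Fˣ × Fˣ => ((u.1, -u.1), (u.2, -u.2))) ∪
      (univ.image (fun u : Fˣ × Fˣ => (u, u)) ∪ univ.image (fun u : Fˣ × Fˣ => (u, u.swap)))
  have hcard : #(univ : Finset (Fˣ × Fˣ)) = Fintype.card Fˣ ^ 2 := by
    rw [card_univ, Fintype.card_prod, sq]
  refine (card_le_card (t := families) ?_).trans ?_
  · rintro ⟨⟨x, y⟩, ⟨z, w⟩⟩ h
    obtain ⟨hadd, hinv⟩ : (x + y : F) = z + w ∧ (↑x⁻¹ + ↑y⁻¹ : F) = ↑z⁻¹ + ↑w⁻¹ :=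
      (mem_filter.1 h).2
    simp only [families, mem_union, mem_image, mem_univ, true_and]
    rcases eq_neg_or_eq_or_swap_of_add_eq_of_inv_add_inv_eq hadd hinv with
      ⟨rfl, rfl⟩ | ⟨rfl, rfl⟩ | ⟨rfl, rfl⟩
    · exact .inl ⟨(x, z), rfl⟩
    · exact .inr (.inl ⟨(z, w), rfl⟩)
    · exact .inr (.inr ⟨(w, z), rfl⟩)
  · calc #families
        ≤ #univ + (#univ + #univ) := (card_union_le _ _).trans (add_le_add card_image_le
          ((card_union_le _ _).trans (add_le_add card_image_le card_image_le)))
      _ = 3 * Fintype.card Fˣ ^ 2 := by rw [hcard]; ring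

lemma sum_norm_twistedKloostermanSum_pow_four_le (χ : MulChar F ℂ) {ψ : AddChar F ℂ}
    (hψ : ψ.IsPrimitive) :
    ∑ v : F × F, ‖twistedKloostermanSum χ ψ v.1 v.2‖ ^ 4 ≤
      Fintype.card F ^ 2 * (3 * Fintype.card Fˣ ^ 2) :=
  calc ∑ v : F × F, ‖twistedKloostermanSum χ ψ v.1 v.2‖ ^ 4
      = ∑ v : F × F, ‖∑ x : Fˣ × Fˣ, χ x.1 * χ x.2 *
          ψ (v.1 * (x.1 + x.2) + v.2 * (↑x.1⁻¹ + ↑x.2⁻¹))‖ ^ 2 := by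
        simp only [← twistedKloostermanSum_sq, norm_pow, ← pow_mul]
    _ ≤ Fintype.card F ^ 2 * _ :=
        sum_prod_norm_sq_sum_addChar_le hψ (by simp [norm_mulChar_units]) _ _
    _ ≤ Fintype.card F ^ 2 * (3 * Fintype.card Fˣ ^ 2) := by
        gcongr
        exact_mod_cast card_add_eq_and_inv_add_inv_eq_le_s10

lemma norm_twistedKloostermanSum_pow_four_le_of_field (χ : MulChar F ℂ) {ψ : AddChar F ℂ}
    (hψ : ψ.IsPrimitive) {c d : F} (hcd : c ≠ 0 ∨ d ≠ 0) :
    ‖twistedKloostermanSum χ ψ c d‖ ^ 4 ≤ 3 * Fintype.card F ^ 2 * Fintype.card Fˣ := by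
  let orbit (v : Fˣ) : F × F := (c * v, d * ↑v⁻¹)
  have orbit_injective : Function.Injective orbit := fun u v huv => by
    obtain ⟨hc, hd⟩ := Prod.mk.inj huv
    rcases hcd with h | h
    · exact Units.ext (mul_left_cancel₀ h hc)
    · exact inv_injective (Units.ext (mul_left_cancel₀ h hd))
  have horbit : Fintype.card Fˣ * ‖twistedKloostermanSum χ ψ c d‖ ^ 4 ≤
      Fintype.card F ^ 2 * (3 * Fintype.card Fˣ ^ 2) :=
    calc Fintype.card Fˣ * ‖twistedKloostermanSum χ ψ c d‖ ^ 4
        = ∑ v : Fˣ, ‖twistedKloostermanSum χ ψ (orbit v).1 (orbit v).2‖ ^ 4 := by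
          simp only [orbit, norm_twistedKloostermanSum_mul_units, sum_const, card_univ,
            nsmul_eq_mul]
      _ = ∑ v ∈ univ.image orbit, ‖twistedKloostermanSum χ ψ v.1 v.2‖ ^ 4 :=
          by rw [sum_image orbit_injective.injOn]
      _ ≤ ∑ v : F × F, ‖twistedKloostermanSum χ ψ v.1 v.2‖ ^ 4 :=
          sum_le_sum_of_subset_of_nonneg (subset_univ _) fun _ _ _ => by positivity
      _ ≤ _ := sum_norm_twistedKloostermanSum_pow_four_le χ hψ
  have hpos : (0 : ℝ) < Fintype.card Fˣ := by exact_mod_cast Fintype.card_pos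
  refine le_of_mul_le_mul_left (horbit.trans_eq ?_) hpos
  ring

end FourthMoment

section StationaryPhase

variable {R : Type*} [CommRing R]

lemma twistedKloostermanSum_eq_sum_mul_addChar [Fintype Rˣ] {χ : MulChar R ℂ} {ψ : AddChar R ℂ}
    {π : R} (hπ : π * π = 0) (hχ : ∀ u : Rˣ, π ∣ u - 1 → χ u = 1) (c d t : R) :
    twistedKloostermanSum χ ψ c d =
      ∑ u : Rˣ, χ u * ψ (c * u + d * ↑u⁻¹) * ψ (t * (π * (c * u - d * ↑u⁻¹))) := by
  have hinv : (1 + π * t) * (1 - π * t) = 1 := by linear_combination -t ^ 2 * hπ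
  let v : Rˣ := ⟨1 + π * t, 1 - π * t, hinv, mul_comm (1 + π * t) _ ▸ hinv⟩
  have hv : χ v = 1 := hχ v ⟨t, add_sub_cancel_left _ _⟩
  rw [← mulChar_mul_twistedKloostermanSum χ ψ c d v, hv, one_mul, twistedKloostermanSum]
  refine sum_congr rfl fun u _ => ?_
  rw [mul_assoc (χ u), ← ψ.map_add_eq_mul]
  congr 2
  change c * (1 + π * t) * u + d * (1 - π * t) * ↑u⁻¹ = _
  ring

variable [Fintype R] [DecidableEq R]

lemma norm_twistedKloostermanSum_le_card_stationary {χ : MulChar R ℂ} {ψ : AddChar R ℂ}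
    (hψ : ψ.IsPrimitive) {π : R} (hπ : π * π = 0) (hχ : ∀ u : Rˣ, π ∣ u - 1 → χ u = 1)
    (c d : R) :
    ‖twistedKloostermanSum χ ψ c d‖ ≤ #{u : Rˣ | π * (c * u - d * ↑u⁻¹) = 0} := by
  have average : (Fintype.card R : ℂ) * twistedKloostermanSum χ ψ c d =
      Fintype.card R * ∑ u ∈ ({u | π * (c * u - d * ↑u⁻¹) = 0} : Finset Rˣ),
        χ u * ψ (c * u + d * ↑u⁻¹) :=
    calc (Fintype.card R : ℂ) * twistedKloostermanSum χ ψ c d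
        = ∑ t : R, ∑ u : Rˣ, χ u * ψ (c * u + d * ↑u⁻¹) * ψ (t * (π * (c * u - d * ↑u⁻¹))) := by
          simp only [← twistedKloostermanSum_eq_sum_mul_addChar hπ hχ, sum_const, card_univ,
            nsmul_eq_mul]
      _ = ∑ u : Rˣ, χ u * ψ (c * u + d * ↑u⁻¹) *
            if π * (c * u - d * ↑u⁻¹) = 0 then (Fintype.card R : ℂ) else 0 := by
          rw [sum_comm]
          simp only [← mul_sum, AddChar.sum_mulShift _ hψ, Nat.cast_ite, Nat.cast_zero]
      _ = _ := by
          simp only [mul_ite, mul_zero, ← sum_filter, ← sum_mul]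
          exact mul_comm _ _
  rw [mul_left_cancel₀ (Nat.cast_ne_zero.2 Fintype.card_ne_zero) average, ← mul_one (#_ : ℝ),
    ← nsmul_eq_mul]
  refine norm_sum_le_of_le _ (fun u _ => ?_) |>.trans_eq (sum_const _)
  rw [norm_mul, norm_mulChar_units, AddChar.norm_apply, mul_one]

end StationaryPhase

section StationaryPoints

variable {R : Type*} [CommRing R] [PreValuationRing R]

lemma mul_two_mul_eq_zero_or_of_sub_eq_two_mul_unit {π a b : R} {u : Rˣ}
    (hab : π * (a * b) = 0) (hsub : a - b = 2 * u) : π * (2 * a) = 0 ∨ π * (2 * b) = 0 := by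
  have htwo : (2 : R) = (a - b) * ↑u⁻¹ := by rw [hsub, Units.mul_inv_cancel_right]
  rcases ValuationRing.dvd_total a b with ⟨e, rfl⟩ | ⟨e, rfl⟩
  · exact .inr (by linear_combination (1 - e) * ↑u⁻¹ * hab + π * (a * e) * htwo)
  · exact .inl (by linear_combination (e - 1) * ↑u⁻¹ * hab + π * (b * e) * htwo)

variable [Fintype R] [DecidableEq R]

lemma card_stationary_units_le_of_isUnit_left (π : R) {c : R} (hc : IsUnit c) (d : R) :
    #{u : Rˣ | π * (c * u - d * ↑u⁻¹) = 0} ≤ 2 * #{z : R | π * (2 * z) = 0} := by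
  rcases eq_empty_or_nonempty ({u | π * (c * u - d * ↑u⁻¹) = 0} : Finset Rˣ) with h | ⟨u₀, hu₀⟩
  · simp [h]
  have hsq {u : Rˣ} (hu : π * (c * u - d * ↑u⁻¹) = 0) : c * (π * u ^ 2) = π * d := by
    linear_combination u * hu + π * d * u.mul_inv
  have hshift (a : R) : #{u : Rˣ | π * (2 * (u + a)) = 0} ≤ #{z : R | π * (2 * z) = 0} :=
    card_le_card_of_injOn (fun u : Rˣ => (u + a : R)) (fun u hu => by simpa using hu)
      fun u _ v _ huv => Units.ext (add_right_cancel huv)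
  calc #{u : Rˣ | π * (c * u - d * ↑u⁻¹) = 0}
      ≤ #{u : Rˣ | π * (2 * (u + u₀)) = 0 ∨ π * (2 * (u + -u₀)) = 0} := by
        refine card_le_card fun u hu => ?_
        have hfactor : π * ((u + u₀) * (u + -u₀) : R) = 0 := hc.mul_left_cancel <| by
          linear_combination hsq (mem_filter.1 hu).2 - hsq (mem_filter.1 hu₀).2
        simpa using mul_two_mul_eq_zero_or_of_sub_eq_two_mul_unit (u := u₀) hfactor (by ring)
    _ ≤ #{u : Rˣ | π * (2 * (u + u₀)) = 0} + #{u : Rˣ | π * (2 * (u + -u₀)) = 0} := by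
        rw [filter_or]
        exact card_union_le _ _
    _ ≤ 2 * #{z : R | π * (2 * z) = 0} := by
        rw [two_mul]
        exact add_le_add (hshift _) (hshift _)

lemma card_stationary_units_le (π : R) {c d : R} (hcd : IsUnit c ∨ IsUnit d) :
    #{u : Rˣ | π * (c * u - d * ↑u⁻¹) = 0} ≤ 2 * #{z : R | π * (2 * z) = 0} := by
  rcases hcd with hc | hd
  · exact card_stationary_units_le_of_isUnit_left π hc d
  · refine le_of_eq_of_le (card_equiv (Equiv.inv Rˣ) fun u => ?_)
      (card_stationary_units_le_of_isUnit_left π hd c)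
    simp only [mem_filter, mem_univ, true_and, Equiv.inv_apply, inv_inv]
    rw [← neg_eq_zero, ← mul_neg, neg_sub]

end StationaryPoints

section LevelChange

variable {R : Type*} [CommMonoidWithZero R]

lemma changeLevel_units_apply {n N : ℕ} (h : n ∣ N) (χ : DirichletCharacter R n)
    (u : (ZMod N)ˣ) : changeLevel h χ u = χ (ZMod.castHom h (ZMod n) u) := by
  rw [DirichletCharacter.changeLevel_eq_cast_of_dvd, ZMod.castHom_apply]

lemma changeLevel_units_apply_eq_one {n N : ℕ} (h : n ∣ N) (χ : DirichletCharacter R n)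
    {u : (ZMod N)ˣ} (hu : (n : ZMod N) ∣ u - 1) : changeLevel h χ u = 1 := by
  have hmap := map_dvd (ZMod.castHom h (ZMod n)) hu
  rw [map_natCast, ZMod.natCast_self, zero_dvd_iff, map_sub, map_one, sub_eq_zero] at hmap
  rw [changeLevel_units_apply, hmap, map_one]

lemma card_nsmul_sum_comp_of_surjective {G H M : Type*} [Group G] [Group H] [Fintype G]
    [Fintype H] [AddCommMonoid M] {f : G →* H} (hf : Function.Surjective f) (F : H → M) :
    Fintype.card H • ∑ g, F (f g) = Fintype.card G • ∑ h, F h := by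
  have translate (h : H) : ∑ g, F (f g) = ∑ g, F (f g * h) := by
    obtain ⟨g₀, rfl⟩ := hf h
    simp only [← map_mul]
    exact (Equiv.sum_comp (Equiv.mulRight g₀) fun g => F (f g)).symm
  calc Fintype.card H • ∑ g, F (f g)
      = ∑ h, ∑ g, F (f g * h) := by simp only [← translate, sum_const, card_univ]
    _ = ∑ g, ∑ h, F (f g * h) := sum_comm
    _ = ∑ _g : G, ∑ h, F h := sum_congr rfl fun g _ => Equiv.sum_comp (Equiv.mulLeft (f g)) F
    _ = Fintype.card G • ∑ h, F h := by rw [sum_const, card_univ]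

variable {m n N : ℕ} [NeZero n] [NeZero N]

lemma stdAddChar_natCast_mul (hN : N = m * n) (x : ZMod N) :
    ZMod.stdAddChar ((m : ZMod N) * x) =
      ZMod.stdAddChar (ZMod.castHom (Dvd.intro_left m hN.symm) (ZMod n) x) := by
  obtain ⟨k, rfl⟩ := ZMod.intCast_surjective x
  have hm : (m : ℂ) ≠ 0 := fun h => NeZero.ne N (by simp_all)
  rw [map_intCast, ← Int.cast_natCast (R := ZMod N), ← Int.cast_mul, ZMod.stdAddChar_coe,
    ZMod.stdAddChar_coe]
  congr 1
  rw [hN]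
  push_cast
  field_simp

lemma totient_mul_twistedKloostermanSum_changeLevel (hN : N = m * n) (χ : DirichletCharacter ℂ n)
    (c d : ZMod N) :
    (n.totient : ℂ) * twistedKloostermanSum (changeLevel (Dvd.intro_left m hN.symm) χ)
      ZMod.stdAddChar ((m : ZMod N) * c) (m * d) =
    N.totient * twistedKloostermanSum χ ZMod.stdAddChar
      (ZMod.castHom (Dvd.intro_left m hN.symm) (ZMod n) c)
      (ZMod.castHom (Dvd.intro_left m hN.symm) (ZMod n) d) := by
  have h : n ∣ N := Dvd.intro_left m hN.symm
  rw [← ZMod.card_units_eq_totient, ← ZMod.card_units_eq_totient, ← nsmul_eq_mul,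
    ← nsmul_eq_mul (Fintype.card (ZMod N)ˣ), twistedKloostermanSum, twistedKloostermanSum,
    ← card_nsmul_sum_comp_of_surjective (ZMod.unitsMap_surjective h)]
  congr 1
  refine sum_congr rfl fun u _ => ?_
  rw [changeLevel_units_apply, mul_assoc, mul_assoc, ← mul_add, stdAddChar_natCast_mul hN, map_add,
    map_mul, map_mul]
  rfl

end LevelChange

section PrimePower

variable {p s : ℕ} [Fact p.Prime]

instance preValuationRing_zmod_prime_pow_s10 : PreValuationRing (ZMod (p ^ s)) :=
  Function.Surjective.preValuationRing
    ((PadicInt.toZModPow s : ℤ_[p] →+* _) : ℤ_[p] →* ZMod (p ^ s)).toMulHom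
    (ZMod.ringHom_surjective (PadicInt.toZModPow s))

lemma card_natCast_mul_eq_zero_le_s10 (n : ℕ) [NeZero n] {k : ℕ} (hk : 0 < k) :
    #{z : ZMod n | k * z = 0} ≤ k := by
  simpa only [nsmul_eq_mul] using IsAddCyclic.card_nsmul_eq_zero_le (α := ZMod n) hk

lemma norm_twistedKloostermanSum_prime_pow_le_two_mul_card {t : ℕ} (hs : s ≠ 0) (ht : t ≠ 0)
    (hst : s ≤ t + t) (χ : DirichletCharacter ℂ p) {c d : ZMod (p ^ s)}
    (hcd : IsUnit c ∨ IsUnit d) :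
    ‖twistedKloostermanSum (changeLevel (dvd_pow_self p hs) χ) ZMod.stdAddChar c d‖ ≤
      2 * #{z : ZMod (p ^ s) | (p ^ t : ℕ) * (2 * z) = 0} := by
  have hπ : ((p ^ t : ℕ) : ZMod (p ^ s)) * (p ^ t : ℕ) = 0 := by
    rw [← Nat.cast_mul, ← pow_add, ZMod.natCast_eq_zero_iff]
    exact pow_dvd_pow p hst
  have hχ (u : (ZMod (p ^ s))ˣ) (hu : ((p ^ t : ℕ) : ZMod (p ^ s)) ∣ u - 1) :
      changeLevel (dvd_pow_self p hs) χ u = 1 :=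
    changeLevel_units_apply_eq_one _ χ ((Nat.cast_dvd_cast (dvd_pow_self p ht)).trans hu)
  refine (norm_twistedKloostermanSum_le_card_stationary (ZMod.isPrimitive_stdAddChar _) hπ hχ
    c d).trans ?_
  exact_mod_cast card_stationary_units_le _ hcd

lemma norm_twistedKloostermanSum_zmod_prime_pow_four_le (χ : DirichletCharacter ℂ p)
    {c d : ZMod p} (hcd : IsUnit c ∨ IsUnit d) :
    ‖twistedKloostermanSum χ ZMod.stdAddChar c d‖ ^ 4 ≤ 16 * (p : ℝ) ^ 3 := by
  have hunits : (Fintype.card (ZMod p)ˣ : ℝ) ≤ p := by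
    exact_mod_cast (ZMod.card_units_eq_totient p).trans_le p.totient_le
  calc ‖twistedKloostermanSum χ ZMod.stdAddChar c d‖ ^ 4
      ≤ 3 * Fintype.card (ZMod p) ^ 2 * Fintype.card (ZMod p)ˣ :=
        norm_twistedKloostermanSum_pow_four_le_of_field χ (ZMod.isPrimitive_stdAddChar p)
          (hcd.imp IsUnit.ne_zero IsUnit.ne_zero)
    _ ≤ 3 * p ^ 2 * p := by rw [ZMod.card]; gcongr
    _ ≤ 16 * p ^ 3 := by nlinarith [pow_nonneg (Nat.cast_nonneg (α := ℝ) p) 3]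

lemma norm_twistedKloostermanSum_odd_prime_pow_four_le (hp : p ≠ 2) (hs : 1 < s)
    (χ : DirichletCharacter ℂ p) {c d : ZMod (p ^ s)} (hcd : IsUnit c ∨ IsUnit d) :
    ‖twistedKloostermanSum (changeLevel (dvd_pow_self p (Nat.ne_zero_of_lt hs)) χ)
      ZMod.stdAddChar c d‖ ^ 4 ≤ 16 * ((p : ℝ) ^ s) ^ 3 := by
  obtain ⟨t, ht⟩ : ∃ t, t = s - s / 2 := ⟨_, rfl⟩
  have hp_prime : p.Prime := Fact.out
  have htwo : IsUnit (2 : ZMod (p ^ s)) := by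
    exact_mod_cast (ZMod.isUnit_natCast_iff_not_dvd_pow hp_prime (by omega)).2
      (mt (Nat.prime_dvd_prime_iff_eq hp_prime Nat.prime_two).1 hp)
  have hcount : #{z : ZMod (p ^ s) | (p ^ t : ℕ) * (2 * z) = 0} ≤ p ^ t := by
    simpa only [mul_left_comm _ (2 : ZMod (p ^ s)), htwo.mul_right_eq_zero] using
      card_natCast_mul_eq_zero_le_s10 (p ^ s) (pow_pos hp_prime.pos t)
  calc _ ≤ (2 * (p : ℝ) ^ t) ^ 4 := by
        gcongr
        refine (norm_twistedKloostermanSum_prime_pow_le_two_mul_card (t := t) (Nat.ne_zero_of_lt hs)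
          (by omega) (by omega) χ hcd).trans ?_
        exact_mod_cast Nat.mul_le_mul_left 2 hcount
    _ = 16 * (p : ℝ) ^ (t * 4) := by ring
    _ ≤ 16 * (p : ℝ) ^ (s * 3) := by
        have hp_one : (1 : ℝ) ≤ p := by exact_mod_cast hp_prime.one_le
        gcongr ?_ * ?_
        exact pow_le_pow_right₀ hp_one (by omega)
    _ = 16 * ((p : ℝ) ^ s) ^ 3 := by rw [pow_mul]

lemma norm_twistedKloostermanSum_two_pow_four_le (hs : s ≠ 0) (χ : DirichletCharacter ℂ 2)
    {c d : ZMod (2 ^ s)} (hcd : IsUnit c ∨ IsUnit d) :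
    ‖twistedKloostermanSum (changeLevel (dvd_pow_self 2 hs) χ) ZMod.stdAddChar c d‖ ^ 4 ≤
      16 * ((2 : ℝ) ^ s) ^ 3 := by
  obtain ⟨k, hk, hbound⟩ : ∃ k, 4 * k ≤ 4 + 3 * s ∧
      ‖twistedKloostermanSum (changeLevel (dvd_pow_self 2 hs) χ) ZMod.stdAddChar c d‖ ≤ 2 ^ k := by
    -- For `s ≤ 5` the stationary phase bound `4 * 2 ^ t` is too weak, and the trivial one suffices.
    rcases le_or_gt s 5 with hs5 | hs5
    · refine ⟨s - 1, by omega, (norm_twistedKloostermanSum_le_card_units _ _ c d).trans_eq ?_⟩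
      rw [ZMod.card_units_eq_totient, Nat.totient_prime_pow Nat.prime_two (Nat.pos_of_ne_zero hs)]
      norm_num
    · obtain ⟨t, ht⟩ : ∃ t, t = s - s / 2 := ⟨_, rfl⟩
      have hcount : #{z : ZMod (2 ^ s) | (2 ^ t : ℕ) * (2 * z) = 0} ≤ 2 ^ (t + 1) := by
        simpa [pow_succ, mul_assoc] using
          card_natCast_mul_eq_zero_le_s10 (2 ^ s) (k := 2 ^ (t + 1)) (by positivity)
      refine ⟨t + 2, by omega, (norm_twistedKloostermanSum_prime_pow_le_two_mul_card (t := t) hs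
        (by omega) (by omega) χ hcd).trans ?_⟩
      rw [pow_succ' _ (t + 1)]
      exact_mod_cast Nat.mul_le_mul_left 2 hcount
  calc _ ≤ ((2 : ℝ) ^ k) ^ 4 := by gcongr
    _ = 2 ^ (4 * k) := by ring
    _ ≤ 2 ^ (4 + 3 * s) := pow_le_pow_right₀ one_le_two hk
    _ = 16 * ((2 : ℝ) ^ s) ^ 3 := by rw [pow_add, mul_comm 3 s, pow_mul]; norm_num

lemma norm_twistedKloostermanSum_prime_pow_pow_four_le_of_isUnit (hs : s ≠ 0)
    (χ : DirichletCharacter ℂ p) {c d : ZMod (p ^ s)} (hcd : IsUnit c ∨ IsUnit d) :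
    ‖twistedKloostermanSum (changeLevel (dvd_pow_self p hs) χ) ZMod.stdAddChar c d‖ ^ 4 ≤
      16 * ((p : ℝ) ^ s) ^ 3 := by
  rcases eq_or_ne p 2 with rfl | hp
  · exact_mod_cast norm_twistedKloostermanSum_two_pow_four_le hs χ hcd
  rcases eq_or_ne s 1 with rfl | hs1
  · have : Fact (p ^ 1).Prime := ⟨by rw [pow_one]; exact Fact.out⟩
    exact_mod_cast norm_twistedKloostermanSum_zmod_prime_pow_four_le (p := p ^ 1) _ hcd
  · exact norm_twistedKloostermanSum_odd_prime_pow_four_le hp (by omega) χ hcd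

lemma twistedKloostermanSum_prime_pow_mul (m : ℕ) (hs : s ≠ 0)
    (χ : DirichletCharacter ℂ p) (c d : ℤ) :
    twistedKloostermanSum (changeLevel (dvd_pow_self p (show m + s ≠ 0 by omega)) χ)
        ZMod.stdAddChar ((p ^ m * c : ℤ) : ZMod (p ^ (m + s))) (p ^ m * d : ℤ) =
    p ^ m * twistedKloostermanSum (changeLevel (dvd_pow_self p hs) χ) ZMod.stdAddChar
      (c : ZMod (p ^ s)) d := by
  have htotient : (p ^ (m + s)).totient = p ^ m * (p ^ s).totient := by
    have hp : p.Prime := Fact.out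
    rw [Nat.totient_prime_pow hp (by omega), Nat.totient_prime_pow hp (by omega), ← mul_assoc,
      ← pow_add, Nat.add_sub_assoc (by omega)]
  have hne : ((p ^ s).totient : ℂ) ≠ 0 :=
    Nat.cast_ne_zero.2 (Nat.totient_pos.2 (NeZero.pos (p ^ s))).ne'
  have hdescent := totient_mul_twistedKloostermanSum_changeLevel (pow_add p m s)
    (changeLevel (dvd_pow_self p hs) χ) c d
  rw [← DirichletCharacter.changeLevel_trans, map_intCast, map_intCast, htotient] at hdescent
  refine mul_left_cancel₀ hne ?_
  push_cast at hdescent ⊢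
  rw [hdescent]
  ring

lemma exists_eq_prime_pow_mul_of_gcd_prime_pow (r : ℕ) (c d : ℤ) :
    ∃ (m s : ℕ) (c' d' : ℤ), r = m + s ∧ (p ^ r).gcd (c.gcd d) = p ^ m ∧
      c = p ^ m * c' ∧ d = p ^ m * d' ∧ (s = 0 ∨ ¬(p : ℤ) ∣ c' ∨ ¬(p : ℤ) ∣ d') := by
  have hp : p.Prime := Fact.out
  obtain ⟨m, hmr, hgcd⟩ := (Nat.dvd_prime_pow hp).1 (Nat.gcd_dvd_left (p ^ r) (c.gcd d))
  obtain ⟨s, rfl⟩ := Nat.exists_eq_add_of_le hmr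
  have hdvd : ((p ^ m : ℕ) : ℤ) ∣ c.gcd d :=
    Int.natCast_dvd_natCast.2 (hgcd ▸ Nat.gcd_dvd_right _ _)
  obtain ⟨c', hc⟩ := hdvd.trans (Int.gcd_dvd_left c d)
  obtain ⟨d', hd⟩ := hdvd.trans (Int.gcd_dvd_right c d)
  push_cast at hc hd
  refine ⟨m, s, c', d', rfl, hgcd, hc, hd, ?_⟩
  by_contra! ⟨hs, hpc, hpd⟩
  have hsucc : p ^ (m + 1) ∣ p ^ m := by
    rw [← hgcd, Nat.dvd_gcd_iff, Int.dvd_gcd_iff, hc, hd]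
    push_cast
    exact ⟨pow_dvd_pow p (by omega), mul_dvd_mul_left _ hpc, mul_dvd_mul_left _ hpd⟩
  exact absurd ((Nat.pow_dvd_pow_iff_le_right hp.one_lt).1 hsucc) (by omega)

theorem norm_twistedKloostermanSum_prime_pow_pow_four_le {r : ℕ} (hr : r ≠ 0)
    (χ : DirichletCharacter ℂ p) (c d : ℤ) :
    ‖twistedKloostermanSum (changeLevel (dvd_pow_self p hr) χ) ZMod.stdAddChar
      (c : ZMod (p ^ r)) d‖ ^ 4 ≤ 16 * ((p : ℝ) ^ r) ^ 3 * (p ^ r).gcd (c.gcd d) := by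
  obtain ⟨m, s, c, d, rfl, hgcd, rfl, rfl, hcd⟩ :=
    exists_eq_prime_pow_mul_of_gcd_prime_pow (p := p) r c d
  rw [hgcd, Nat.cast_pow]
  rcases eq_or_ne s 0 with rfl | hs
  · have hunits : (Fintype.card (ZMod (p ^ (m + 0)))ˣ : ℝ) ≤ (p : ℝ) ^ m := by
      exact_mod_cast (ZMod.card_units_eq_totient _).trans_le (Nat.totient_le _)
    calc _ ≤ ((p : ℝ) ^ m) ^ 4 := by
          gcongr
          exact (norm_twistedKloostermanSum_le_card_units _ _ _ _).trans hunits
      _ ≤ 16 * ((p : ℝ) ^ m) ^ 4 := le_mul_of_one_le_left (by positivity) (by norm_num)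
      _ = 16 * ((p : ℝ) ^ (m + 0)) ^ 3 * (p : ℝ) ^ m := by ring
  · have isUnit_of_not_dvd {a : ℤ} (ha : ¬(p : ℤ) ∣ a) : IsUnit (a : ZMod (p ^ s)) := by
      rw [ZMod.coe_int_isUnit_iff_isCoprime]
      push_cast
      exact ((Nat.prime_iff_prime_int.1 Fact.out).coprime_iff_not_dvd.2 ha).pow_left
    have hcd : IsUnit (c : ZMod (p ^ s)) ∨ IsUnit (d : ZMod (p ^ s)) :=
      (hcd.resolve_left hs).imp isUnit_of_not_dvd isUnit_of_not_dvd
    rw [twistedKloostermanSum_prime_pow_mul m hs, norm_mul, mul_pow, norm_pow,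
      Complex.norm_natCast]
    calc _ ≤ ((p : ℝ) ^ m) ^ 4 * (16 * ((p : ℝ) ^ s) ^ 3) :=
          mul_le_mul_of_nonneg_left
            (norm_twistedKloostermanSum_prime_pow_pow_four_le_of_isUnit hs χ hcd) (by positivity)
      _ = 16 * ((p : ℝ) ^ (m + s)) ^ 3 * (p : ℝ) ^ m := by ring

end PrimePower

section Residues

lemma sum_Icc_coprime_eq_sum_units {M : Type*} [AddCommMonoid M] (q : ℕ) [NeZero q]
    (f : ZMod q → M) : ∑ b ∈ Icc 1 q with b.Coprime q, f b = ∑ u : (ZMod q)ˣ, f u := by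
  have hcast (u : ZMod q) : (((u - 1).val + 1 : ℕ) : ZMod q) = u := by
    rw [Nat.cast_succ, ZMod.natCast_zmod_val, sub_add_cancel]
  refine sum_bij' (fun b hb => ZMod.unitOfCoprime b (mem_filter.1 hb).2)
    (fun u _ => ((u - 1 : ZMod q)).val + 1) (fun _ _ => mem_univ _) (fun u _ => ?_)
    (fun b hb => ?_) (fun u _ => Units.ext (hcast u)) fun _ _ => rfl
  · rw [mem_filter, mem_Icc, ← ZMod.isUnit_iff_coprime, hcast]
    exact ⟨⟨Nat.le_add_left 1 _, ZMod.val_lt _⟩, u.isUnit⟩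
  · obtain ⟨hb_pos, hb_le⟩ := mem_Icc.1 (mem_filter.1 hb).1
    rw [ZMod.coe_unitOfCoprime, ← Nat.cast_pred hb_pos, ZMod.val_cast_of_lt (by omega)]
    omega

lemma eChar_eq_stdAddChar (q : ℕ) [NeZero q] (x : ℤ) : eChar q x = ZMod.stdAddChar (x : ZMod q) :=
  (ZMod.stdAddChar_coe x).symm

lemma sum_mul_eChar_eq_twistedKloostermanSum {n q : ℕ} [NeZero q] (h : n ∣ q)
    (χ : DirichletCharacter ℂ n) (c d : ℤ) :
    ∑ b ∈ Icc 1 q with b.Coprime q, χ b * eChar q (c * b + d * ((b : ZMod q)⁻¹.val : ℤ)) =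
      twistedKloostermanSum (changeLevel h χ) ZMod.stdAddChar (c : ZMod q) d := by
  have hlift (b : ℕ) : (χ b : ℂ) = χ (ZMod.castHom h (ZMod n) b) := by
    rw [map_natCast (ZMod.castHom h (ZMod n))]
  simp only [hlift, eChar_eq_stdAddChar]
  push_cast
  simp only [ZMod.natCast_zmod_val]
  rw [sum_Icc_coprime_eq_sum_units q fun b : ZMod q =>
    χ (ZMod.castHom h (ZMod n) b) * ZMod.stdAddChar ((c : ZMod q) * b + (d : ZMod q) * b⁻¹),
    twistedKloostermanSum]
  simp only [changeLevel_units_apply, ZMod.inv_coe_unit]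

end Residues

theorem salie_sum_bound_general (p : ℕ) [Fact p.Prime] {r : ℕ} (hr : r ≠ 0)
    (χ : DirichletCharacter ℂ p) (c d : ℤ) :
    ‖∑ b ∈ Icc 1 (p ^ r) with Nat.gcd b p = 1,
        χ b * eChar (p ^ r) (c * b + d * ((b : ZMod (p ^ r))⁻¹.val : ℤ))‖
      ≤ 2 * ((p : ℝ) ^ r) ^ ((3 : ℝ) / 4) *
          (Nat.gcd (p ^ r) (Int.gcd c d) : ℝ) ^ ((1 : ℝ) / 4) := by
  have hcoprime (b : ℕ) : Nat.gcd b p = 1 ↔ b.Coprime (p ^ r) :=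
    (Nat.coprime_pow_right_iff (Nat.pos_of_ne_zero hr) b p).symm
  simp only [hcoprime]
  rw [sum_mul_eChar_eq_twistedKloostermanSum (dvd_pow_self p hr)]
  refine le_of_pow_le_pow_left₀ four_ne_zero (by positivity)
    ((norm_twistedKloostermanSum_prime_pow_pow_four_le hr χ c d).trans_eq ?_)
  rw [mul_pow, mul_pow, ← Real.rpow_mul_natCast (by positivity),
    ← Real.rpow_mul_natCast (by positivity)]
  norm_num

/-- Elementary Salié sum bound: for `q = p^r` with `p` an odd prime,
`|∑_{(b,p)=1} (b/p) e_q(cb + d b̄)| ≤ 2 q^{3/4} gcd(q,c,d)^{1/4}`. -/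
theorem salie_sum_bound (p : ℕ) [Fact p.Prime] (hodd : Odd p) (r : ℕ) (hr : 1 ≤ r)
    (c d : ℤ) :
    norm (∑ b ∈ (Finset.Icc 1 (p ^ r)).filter (fun b => Nat.gcd b p = 1),
        (legendreSym p (b : ℤ) : ℂ) *
          eChar (p ^ r) (c * b + d * (((b : ZMod (p ^ r))⁻¹).val : ℤ)))
      ≤ 2 * ((p : ℝ) ^ r) ^ ((3 : ℝ) / 4) *
          ((Nat.gcd (p ^ r) (Int.gcd c d) : ℝ)) ^ ((1 : ℝ) / 4) := by
  simpa [legendreSym] using salie_sum_bound_general p (Nat.one_le_iff_ne_zero.1 hr)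
    ((quadraticChar (ZMod p)).ringHomComp (Int.castRingHom ℂ)) c d
end

section
/- Let γ: ℝ → ℝ be a smooth function supported in [0,1] with 0 ≤ γ ≤ 1. There is a constant C_γ (depending only on γ) such that for every real binary quadratic form f(y,z) = A y² + 2B y z + C z² with D = AC − B² ≠ 0, every real φ ≠ 0, every P > 0, and all reals α, β: |∫_ℝ ∫_ℝ γ(y/P) γ(z/P) e(φ·f(y,z) + α y + β z) dy dz| ≤ C_γ / (|φ| · |D|^{1/2}), where e(t) = exp(2πi t). -/
/-!
By Fourier inversion, a weight `w` with integrable Fourier transform is a superposition of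
characters of total mass `‖𝓕 w‖₁`. Multiplying the oscillation `e(⟪T x, x⟫ + ⟪v, x⟫)` by a character
only changes `v`, so it is enough to bound the unweighted integral uniformly in `v`. Damped by
`exp(-ε‖x‖²)`, this integral factors in an orthonormal eigenbasis of `T`, because the damping is
rotation invariant; the factor at an eigenvalue `μ` is a one-dimensional complex Gaussian integral
of modulus at most `(2|μ|)^(-1/2)`, whatever `ε` and `v` are. The product of these bounds is
`(2ⁿ |det T|)^(-1/2)`, and `ε → 0` by dominated convergence. Dilating the weight changes neither
`‖𝓕 w‖₁` nor, therefore, the bound.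
-/

open MeasureTheory Filter Topology Module
open scoped FourierTransform RealInnerProductSpace SchwartzMap

namespace QuadraticPhase

lemma norm_cpow_mul_cexp_le {b : ℂ} (hre : 0 ≤ b.re) (him : b.im ≠ 0) (s : ℝ) :
    ‖(Real.pi / b) ^ (1 / 2 : ℂ) * Complex.exp ((s * Complex.I) ^ 2 / (4 * b))‖ ≤
      √(Real.pi / |b.im|) := by
  have h_amplitude : ‖(Real.pi / b) ^ (1 / 2 : ℂ)‖ ≤ √(Real.pi / |b.im|) := by
    have h_half : (1 / 2 : ℂ) = ((1 / 2 : ℝ) : ℂ) := by norm_num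
    rw [h_half, Complex.norm_cpow_real, ← Real.sqrt_eq_rpow, norm_div, Complex.norm_real,
      Real.norm_of_nonneg Real.pi_pos.le]
    gcongr
    exact Complex.abs_im_le_norm b
  have h_decay : ‖Complex.exp ((s * Complex.I) ^ 2 / (4 * b))‖ ≤ 1 := by
    have h_exponent : (s * Complex.I) ^ 2 / (4 * b) = ((-(s ^ 2 / 4) : ℝ) : ℂ) * b⁻¹ := by
      rw [mul_pow, Complex.I_sq]
      push_cast
      ring
    rw [Complex.norm_exp, Real.exp_le_one_iff, h_exponent, Complex.re_ofReal_mul, Complex.inv_re]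
    exact mul_nonpos_of_nonpos_of_nonneg (neg_nonpos.2 (by positivity))
      (div_nonneg hre (Complex.normSq_nonneg b))
  rw [norm_mul]
  exact (mul_le_of_le_one_right (norm_nonneg _) h_decay).trans h_amplitude

lemma integral_euclideanSpace_fin_two {E : Type*} [NormedAddCommGroup E] [NormedSpace ℝ E]
    {f : EuclideanSpace ℝ (Fin 2) → E} (hf : Integrable f) :
    ∫ x, f x = ∫ y : ℝ, ∫ z : ℝ, f !₂[y, z] := by
  let e : ℝ × ℝ ≃ᵐ EuclideanSpace ℝ (Fin 2) :=
    MeasurableEquiv.finTwoArrow.symm.trans (MeasurableEquiv.toLp 2 (Fin 2 → ℝ))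
  have he : MeasurePreserving e :=
    (PiLp.volume_preserving_toLp (Fin 2)).comp (volume_preserving_finTwoArrow ℝ).symm
  rw [← he.integral_comp e.measurableEmbedding, Measure.volume_eq_prod]
  exact integral_prod _ (he.integrable_comp_emb e.measurableEmbedding |>.2 hf)

lemma exists_schwartzMap_eq_prod {ι : Type*} [Fintype ι] {f : ι → ℝ → ℂ}
    (hf : ∀ i, ContDiff ℝ (⊤ : ℕ∞) (f i)) (hsupp : ∀ i, HasCompactSupport (f i)) :
    ∃ w : 𝓢(EuclideanSpace ℝ ι, ℂ), ∀ x, w x = ∏ i, f i (x i) := by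
  have h_smooth : ContDiff ℝ (⊤ : ℕ∞) fun x : EuclideanSpace ℝ ι => ∏ i, f i (x i) :=
    contDiff_prod fun i _ => (hf i).comp (contDiff_piLp_apply 2)
  have h_box : IsCompact (WithLp.toLp 2 '' Set.univ.pi fun i => tsupport (f i)) :=
    (isCompact_univ_pi hsupp).image (PiLp.continuous_toLp 2 _)
  have h_compact : HasCompactSupport fun x : EuclideanSpace ℝ ι => ∏ i, f i (x i) := by
    refine .of_support_subset_isCompact h_box fun x hx => ⟨x.ofLp, fun i _ => ?_, rfl⟩
    exact subset_tsupport _ (Finset.prod_ne_zero_iff.1 hx i (Finset.mem_univ i))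
  exact ⟨h_compact.toSchwartzMap h_smooth, fun _ => rfl⟩

lemma norm_integral_mul_le_of_norm_fourierInv_le {V : Type*} [NormedAddCommGroup V]
    [InnerProductSpace ℝ V] [FiniteDimensional ℝ V] [MeasurableSpace V] [BorelSpace V]
    {w k : V → ℂ} (hw : Continuous w) (hwi : Integrable w)
    (hFw : Integrable (𝓕 w)) (hk : Integrable k)
    {M : ℝ} (hM : ∀ u, ‖𝓕⁻ k u‖ ≤ M) : ‖∫ x, w x * k x‖ ≤ (∫ u, ‖𝓕 w u‖) * M := by
  have h_parseval : ∫ x, w x * k x = ∫ u, 𝓕 w u * 𝓕⁻ k u := by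
    have h_flip := VectorFourier.integral_fourierIntegral_smul_eq_flip (L := -innerₗ V)
      Real.continuous_fourierChar (by simpa using! continuous_inner.neg) hFw hk
    have h_symm : (-innerₗ V).flip = -innerₗ V := by
      ext x y
      simp [real_inner_comm]
    rw [h_symm] at h_flip
    conv_lhs => rw [← hw.fourierInv_fourier_eq hwi hFw]
    exact h_flip
  rw [h_parseval, ← integral_mul_const]
  refine norm_integral_le_of_norm_le (hFw.norm.mul_const M) (ae_of_all _ fun u => ?_)
  rw [norm_mul]
  exact mul_le_mul_of_nonneg_left (hM u) (norm_nonneg _)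

section Chirp

variable {V : Type*} [NormedAddCommGroup V] [InnerProductSpace ℝ V] {T : V →ₗ[ℝ] V}

/-- The oscillation `e(⟪T x, x⟫ + ⟪v, x⟫)`, where `e(t) = exp(2πit)`, damped by the Gaussian
`exp(-ε‖x‖²)`. The undamped oscillation is the case `ε = 0`; damping makes its integral and its
Fourier transform converge absolutely. -/
noncomputable def gaussianChirp (ε : ℝ) (T : V →ₗ[ℝ] V) (v x : V) : ℂ :=
  Complex.exp (-ε * ‖x‖ ^ 2 + 2 * Real.pi * Complex.I * (⟪T x, x⟫ + ⟪v, x⟫ : ℝ))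

lemma norm_gaussianChirp (ε : ℝ) (T : V →ₗ[ℝ] V) (v x : V) :
    ‖gaussianChirp ε T v x‖ = Real.exp (-ε * ‖x‖ ^ 2) := by
  rw [gaussianChirp, Complex.norm_exp]
  congr 1
  simp [← Complex.ofReal_pow]

lemma norm_gaussianChirp_le_one {ε : ℝ} (hε : 0 ≤ ε) (T : V →ₗ[ℝ] V) (v x : V) :
    ‖gaussianChirp ε T v x‖ ≤ 1 := by
  rw [norm_gaussianChirp, Real.exp_le_one_iff, neg_mul]
  exact neg_nonpos.2 (by positivity)

lemma gaussianChirp_smul (ε : ℝ) (T : V →ₗ[ℝ] V) (v x : V) (r : ℝ) :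
    gaussianChirp ε T v (r • x) = gaussianChirp (ε * r ^ 2) (r ^ 2 • T) (r • v) x := by
  simp only [gaussianChirp, map_smul, LinearMap.smul_apply, real_inner_smul_left,
    real_inner_smul_right, norm_smul, mul_pow, Real.norm_eq_abs, ← Complex.ofReal_pow,
    Complex.ofReal_mul, sq_abs]
  congr 1
  push_cast
  ring

variable [FiniteDimensional ℝ V]

lemma continuous_gaussianChirp (T : V →ₗ[ℝ] V) (v : V) :
    Continuous fun p : ℝ × V => gaussianChirp p.1 T v p.2 := by
  have hT : Continuous T := T.continuous_of_finiteDimensional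
  unfold gaussianChirp
  fun_prop

lemma continuous_gaussianChirp_right (ε : ℝ) (T : V →ₗ[ℝ] V) (v : V) :
    Continuous (gaussianChirp ε T v) :=
  (continuous_gaussianChirp T v).comp (.prodMk_right ε)

lemma gaussianChirp_eigenvectorBasis {n : ℕ} (hn : finrank ℝ V = n) (hT : T.IsSymmetric)
    (ε : ℝ) (v : V) (c : Fin n → ℝ) :
    gaussianChirp ε T v ((hT.eigenvectorBasis hn).repr.symm (WithLp.toLp 2 c)) =
      Complex.exp (-∑ i, (ε - 2 * Real.pi * hT.eigenvalues hn i * Complex.I) * (c i : ℂ) ^ 2 +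
        ∑ i, ((2 * Real.pi * (hT.eigenvectorBasis hn).repr v i : ℝ) * Complex.I) * c i) := by
  set e := hT.eigenvectorBasis hn
  set x := e.repr.symm (WithLp.toLp 2 c)
  have hx : e.repr x = WithLp.toLp 2 c := e.repr.apply_symm_apply _
  have h_norm : ‖x‖ ^ 2 = ∑ i, c i ^ 2 := by
    rw [← e.repr.norm_map, hx, EuclideanSpace.real_norm_sq_eq]
  have h_form : ⟪T x, x⟫ = ∑ i, hT.eigenvalues hn i * c i ^ 2 := by
    rw [← e.repr.inner_map_map, PiLp.inner_apply]
    refine Finset.sum_congr rfl fun i _ => ?_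
    rw [hT.eigenvectorBasis_apply_self_apply hn, hx]
    simp only [Real.ringHom_apply, RCLike.inner_apply]
    ring
  have h_linear : ⟪v, x⟫ = ∑ i, e.repr v i * c i := by
    rw [← e.repr.inner_map_map, PiLp.inner_apply, hx]
    simp [mul_comm]
  rw [gaussianChirp, h_form, h_linear, ← Complex.ofReal_pow, h_norm]
  congr 1
  push_cast
  simp only [mul_add, Finset.mul_sum, ← Finset.sum_neg_distrib, ← Finset.sum_add_distrib]
  exact Finset.sum_congr rfl fun i _ => by ring

variable [MeasurableSpace V] [BorelSpace V]

lemma integrable_gaussianChirp {ε : ℝ} (hε : 0 < ε) (T : V →ₗ[ℝ] V) (v : V) :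
    Integrable (gaussianChirp ε T v) := by
  have h_gaussian : Integrable fun x : V => Complex.exp (-ε * ‖x‖ ^ 2) := by
    simpa using GaussianFourier.integrable_cexp_neg_mul_sq_norm_add (V := V) (b := ε) hε 0 0
  refine h_gaussian.mono (continuous_gaussianChirp_right ε T v).aestronglyMeasurable
    (ae_of_all _ fun x => ?_)
  rw [norm_gaussianChirp, Complex.norm_exp]
  simp [← Complex.ofReal_pow]

lemma integral_gaussianChirp {n : ℕ} (hn : finrank ℝ V = n) {ε : ℝ} (hε : 0 < ε)
    (hT : T.IsSymmetric) (v : V) :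
    ∫ x, gaussianChirp ε T v x =
      ∏ i, (Real.pi / (ε - 2 * Real.pi * hT.eigenvalues hn i * Complex.I)) ^ (1 / 2 : ℂ) *
        Complex.exp (((2 * Real.pi * (hT.eigenvectorBasis hn).repr v i : ℝ) * Complex.I) ^ 2 /
          (4 * (ε - 2 * Real.pi * hT.eigenvalues hn i * Complex.I))) := by
  let e := hT.eigenvectorBasis hn
  rw [← e.measurePreserving_repr_symm.integral_comp
      e.repr.symm.toHomeomorph.measurableEmbedding,
    ← (PiLp.volume_preserving_toLp (Fin n)).integral_comp
      (MeasurableEquiv.toLp 2 _).measurableEmbedding]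
  simp only [e, gaussianChirp_eigenvectorBasis]
  exact GaussianFourier.integral_cexp_neg_sum_mul_add (fun i => by simpa using hε) _

lemma norm_integral_gaussianChirp_le {ε : ℝ} (hε : 0 < ε) (hT : T.IsSymmetric)
    (hdet : T.det ≠ 0) (v : V) :
    ‖∫ x, gaussianChirp ε T v x‖ ≤ (√(2 ^ finrank ℝ V * |T.det|))⁻¹ := by
  set eig := hT.eigenvalues rfl
  have h_det : T.det = ∏ i, eig i := hT.det_eq_prod_eigenvalues rfl
  have h_eig (i) : eig i ≠ 0 := Finset.prod_ne_zero_iff.1 (h_det ▸ hdet) i (Finset.mem_univ i)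
  calc ‖∫ x, gaussianChirp ε T v x‖
      ≤ ∏ i, √(Real.pi / |2 * Real.pi * eig i|) := by
        rw [integral_gaussianChirp rfl hε hT, norm_prod]
        refine Finset.prod_le_prod (fun _ _ => norm_nonneg _) fun i _ => ?_
        have hi : (ε - 2 * Real.pi * eig i * Complex.I : ℂ).im = -(2 * Real.pi * eig i) := by
          simp
        rw [← abs_neg, ← hi]
        exact norm_cpow_mul_cexp_le (by simpa using hε.le)
          (by rw [hi]; exact neg_ne_zero.2 (mul_ne_zero Real.two_pi_pos.ne' (h_eig i))) _
    _ = ∏ i, √(2 * |eig i|)⁻¹ := by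
        refine Finset.prod_congr rfl fun i _ => ?_
        rw [abs_mul, abs_of_pos Real.two_pi_pos]
        field_simp
    _ = (√(2 ^ finrank ℝ V * |T.det|))⁻¹ := by
        rw [← Real.sqrt_prod _ fun i _ => by positivity, Finset.prod_inv_distrib, Real.sqrt_inv,
          h_det, Finset.abs_prod, Finset.prod_mul_distrib, Fin.prod_const]

lemma fourierInv_gaussianChirp (ε : ℝ) (T : V →ₗ[ℝ] V) (v u : V) :
    𝓕⁻ (gaussianChirp ε T v) u = ∫ x, gaussianChirp ε T (v + u) x := by
  rw [Real.fourierInv_eq']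
  congr with x
  rw [gaussianChirp, gaussianChirp, smul_eq_mul, ← Complex.exp_add, inner_add_left,
    real_inner_comm x u]
  congr 1
  push_cast
  ring

lemma tendsto_integral_mul_gaussianChirp {w : V → ℂ} (hwi : Integrable w) (T : V →ₗ[ℝ] V)
    (v : V) :
    Tendsto (fun ε => ∫ x, w x * gaussianChirp ε T v x) (𝓝[>] 0)
      (𝓝 (∫ x, w x * gaussianChirp 0 T v x)) := by
  refine tendsto_integral_filter_of_dominated_convergence (fun x => ‖w x‖) ?_ ?_ hwi.norm ?_
  · exact .of_forall fun ε => hwi.aestronglyMeasurable.mul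
      (continuous_gaussianChirp_right ε T v).aestronglyMeasurable
  · filter_upwards [self_mem_nhdsWithin] with ε hε
    refine ae_of_all _ fun x => ?_
    rw [norm_mul]
    exact mul_le_of_le_one_right (norm_nonneg _) (norm_gaussianChirp_le_one (le_of_lt hε) T v x)
  · refine ae_of_all _ fun x => Tendsto.const_mul _ ?_
    have h_cont : Continuous fun ε => gaussianChirp ε T v x :=
      (continuous_gaussianChirp T v).comp (.prodMk_left x)
    exact (h_cont.tendsto 0).mono_left nhdsWithin_le_nhds

theorem norm_integral_mul_gaussianChirp_zero_le {w : V → ℂ} (hw : Continuous w)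
    (hwi : Integrable w) (hFw : Integrable (𝓕 w)) (hT : T.IsSymmetric) (hdet : T.det ≠ 0)
    (v : V) :
    ‖∫ x, w x * gaussianChirp 0 T v x‖ ≤
      (∫ u, ‖𝓕 w u‖) / √(2 ^ finrank ℝ V * |T.det|) := by
  rw [div_eq_mul_inv]
  refine le_of_tendsto (tendsto_integral_mul_gaussianChirp hwi T v).norm ?_
  filter_upwards [self_mem_nhdsWithin] with ε hε
  refine norm_integral_mul_le_of_norm_fourierInv_le hw hwi hFw (integrable_gaussianChirp hε T v)
    fun u => ?_
  rw [fourierInv_gaussianChirp]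
  exact norm_integral_gaussianChirp_le hε hT hdet _

theorem norm_integral_comp_inv_smul_mul_gaussianChirp_zero_le {w : V → ℂ} (hw : Continuous w)
    (hwi : Integrable w) (hFw : Integrable (𝓕 w)) (hT : T.IsSymmetric) (hdet : T.det ≠ 0)
    (v : V) {r : ℝ} (hr : r ≠ 0) :
    ‖∫ x, w (r⁻¹ • x) * gaussianChirp 0 T v x‖ ≤
      (∫ u, ‖𝓕 w u‖) / √(2 ^ finrank ℝ V * |T.det|) := by
  set n := finrank ℝ V
  have h_rescale : ∫ x, w (r⁻¹ • x) * gaussianChirp 0 T v x =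
      |r ^ n| • ∫ x, w x * gaussianChirp 0 (r ^ 2 • T) (r • v) x := by
    rw [← Measure.integral_comp_inv_smul]
    refine integral_congr_ae (ae_of_all _ fun x => ?_)
    dsimp only
    rw [← zero_mul (r ^ 2), ← gaussianChirp_smul, smul_inv_smul₀ hr, zero_mul]
  have h_det : (r ^ 2 • T).det = (r ^ n) ^ 2 * T.det := by
    rw [LinearMap.det_smul, pow_right_comm]
  have h_sqrt : √(2 ^ n * |(r ^ 2 • T).det|) = |r ^ n| * √(2 ^ n * |T.det|) := by
    rw [h_det, abs_mul, abs_sq, mul_left_comm, Real.sqrt_mul (sq_nonneg _), Real.sqrt_sq_eq_abs]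
  have h_bound := norm_integral_mul_gaussianChirp_zero_le hw hwi hFw
    (hT.smul (c := r ^ 2) (by simp)) (by rw [h_det]; positivity) (r • v)
  rw [h_rescale, norm_smul, Real.norm_eq_abs, abs_abs]
  refine (mul_le_mul_of_nonneg_left h_bound (abs_nonneg _)).trans_eq ?_
  rw [h_sqrt]
  field_simp

end Chirp

section BinaryForm

/-- The symmetric operator representing the quadratic form `A y² + 2 B y z + C z²` on the Euclidean
plane, so that the quantity `A C - B²` becomes a determinant. -/
noncomputable def binaryFormOperator (A B C : ℝ) :
    EuclideanSpace ℝ (Fin 2) →ₗ[ℝ] EuclideanSpace ℝ (Fin 2) :=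
  Matrix.toEuclideanLin !![A, B; B, C]

lemma binaryFormOperator_isSymmetric (A B C : ℝ) : (binaryFormOperator A B C).IsSymmetric := by
  refine Matrix.isSymmetric_toEuclideanLin_iff.2 ?_
  ext i j
  fin_cases i <;> fin_cases j <;> rfl

lemma det_binaryFormOperator (A B C : ℝ) :
    (binaryFormOperator A B C).det = A * C - B ^ 2 := by
  rw [binaryFormOperator, Matrix.toEuclideanLin_eq_toLin_orthonormal, LinearMap.det_toLin,
    Matrix.det_fin_two_of, sq]

lemma gaussianChirp_zero_binaryFormOperator (A B C α β y z : ℝ) :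
    gaussianChirp 0 (binaryFormOperator A B C) !₂[α, β] !₂[y, z] =
      Complex.exp (2 * Real.pi * Complex.I *
        ((A * y ^ 2 + 2 * B * y * z + C * z ^ 2 + α * y + β * z : ℝ) : ℂ)) := by
  have h_form : ⟪binaryFormOperator A B C !₂[y, z], !₂[y, z]⟫ =
      A * y ^ 2 + 2 * B * y * z + C * z ^ 2 := by
    have h_apply : binaryFormOperator A B C !₂[y, z] = !₂[A * y + B * z, B * y + C * z] := by
      ext i
      fin_cases i <;> simp [binaryFormOperator, Matrix.toLpLin_apply, mul_comm]
    simp only [h_apply, PiLp.inner_apply, Fin.sum_univ_two, RCLike.inner_apply,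
      Real.ringHom_apply, Matrix.cons_val_zero, Matrix.cons_val_one, Matrix.cons_val_fin_one]
    ring
  have h_linear : ⟪!₂[α, β], !₂[y, z]⟫ = α * y + β * z := by
    simp [PiLp.inner_apply, mul_comm]
  rw [gaussianChirp, h_form, h_linear]
  simp [add_assoc]

end BinaryForm

end QuadraticPhase

open QuadraticPhase

theorem oscillatory_integral_quadratic_phase_general {w : EuclideanSpace ℝ (Fin 2) → ℂ}
    (hw : Continuous w) (hwi : Integrable w) (hFw : Integrable (𝓕 w))
    {A B C φ P : ℝ} (α β : ℝ) (hD : A * C - B ^ 2 ≠ 0) (hφ : φ ≠ 0) (hP : P ≠ 0) :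
    ‖∫ y : ℝ, ∫ z : ℝ, w !₂[y / P, z / P] *
        Complex.exp (2 * Real.pi * Complex.I *
          ((φ * (A * y ^ 2 + 2 * B * y * z + C * z ^ 2) + α * y + β * z : ℝ) : ℂ))‖ ≤
      (∫ u, ‖𝓕 w u‖) / 2 / (|φ| * √|A * C - B ^ 2|) := by
  set T := binaryFormOperator (φ * A) (φ * B) (φ * C)
  have h_det : T.det = φ ^ 2 * (A * C - B ^ 2) := by
    rw [det_binaryFormOperator]
    ring
  have h_sqrt : √(2 ^ 2 * |T.det|) = 2 * (|φ| * √|A * C - B ^ 2|) := by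
    rw [h_det, abs_mul, abs_sq, ← mul_assoc, ← mul_pow, Real.sqrt_mul (sq_nonneg _),
      Real.sqrt_sq_eq_abs, abs_mul, abs_two, mul_assoc]
  have h_integrable : Integrable fun x => w (P⁻¹ • x) * gaussianChirp 0 T !₂[α, β] x :=
    (hwi.comp_smul (inv_ne_zero hP)).mul_bdd (c := 1)
      (continuous_gaussianChirp_right 0 T _).aestronglyMeasurable
      (ae_of_all _ fun x => norm_gaussianChirp_le_one le_rfl T _ x)
  have h_bound := norm_integral_comp_inv_smul_mul_gaussianChirp_zero_le hw hwi hFw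
    (binaryFormOperator_isSymmetric (φ * A) (φ * B) (φ * C))
    (by rw [h_det]; positivity) !₂[α, β] hP
  rw [finrank_euclideanSpace_fin, h_sqrt, integral_euclideanSpace_fin_two h_integrable] at h_bound
  have h_scaling (y z : ℝ) : P⁻¹ • !₂[y, z] = !₂[y / P, z / P] := by
    ext i
    fin_cases i <;> simp [div_eq_inv_mul]
  have h_phase (y z : ℝ) : φ * A * y ^ 2 + 2 * (φ * B) * y * z + φ * C * z ^ 2 + α * y + β * z =
      φ * (A * y ^ 2 + 2 * B * y * z + C * z ^ 2) + α * y + β * z := by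
    ring
  simp only [T, gaussianChirp_zero_binaryFormOperator, h_scaling, h_phase] at h_bound
  rwa [div_div]

/-- Stationary phase bound for the oscillatory integral with a nondegenerate quadratic
phase: `|∬ γ(y/P)γ(z/P) e(φ f(y,z) + αy + βz) dy dz| ≤ C_γ / (|φ| |D|^{1/2})` where
`D = AC − B²` is the determinant of `f`. -/
theorem oscillatory_integral_quadratic_phase
    (γ : ℝ → ℝ) (hsmooth : ContDiff ℝ (⊤ : ℕ∞) γ)
    (hsupp : Function.support γ ⊆ Set.Icc 0 1)
    (hpos : ∀ t, 0 ≤ γ t) (hle : ∀ t, γ t ≤ 1) :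
    ∃ Cγ : ℝ, ∀ A B C φ P α β : ℝ, A * C - B ^ 2 ≠ 0 → φ ≠ 0 → 0 < P →
      norm (∫ y : ℝ, ∫ z : ℝ,
          ((γ (y / P) * γ (z / P) : ℝ) : ℂ) *
            Complex.exp (2 * Real.pi * Complex.I *
              ((φ * (A * y ^ 2 + 2 * B * y * z + C * z ^ 2) + α * y + β * z : ℝ) : ℂ)))
        ≤ Cγ / (|φ| * Real.sqrt |A * C - B ^ 2|) := by
  have h_compact : HasCompactSupport γ := .of_support_subset_isCompact isCompact_Icc hsupp
  obtain ⟨w, hw⟩ := exists_schwartzMap_eq_prod (ι := Fin 2)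
    (fun _ => Complex.ofRealCLM.contDiff.comp hsmooth)
    (fun _ => h_compact.comp_left Complex.ofReal_zero)
  refine ⟨(∫ u, ‖𝓕 (w : _ → ℂ) u‖) / 2, fun A B C φ P α β hD hφ hP => ?_⟩
  simpa [hw] using oscillatory_integral_quadratic_phase_general w.continuous w.integrable
    (SchwartzMap.fourier_coe w ▸ (𝓕 w).integrable) α β hD hφ hP.ne'
end
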